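/- arXiv:1306.3930 — 6 statements merged into one kernel-verified Lean document; each statement's English description precedes it below -/
import Mathlib

section
/- Let C be a d-dimensional copula satisfying Condition (pd). If α_n^⋆ ∈ D_n^⋆ for every n and α^⋆ ∈ D_0^⋆ are such that sup_{Δ×[0,1]^d} |α_n^⋆ − α^⋆| → 0, then sup_{(s,t,u)∈Δ×[0,1]^d} |g_n(α_n^⋆)(s,t,u) − g(α^⋆)(s,t,u)| → 0 as n → ∞, where g(α^⋆)(s,t,u) = α^⋆(s,t,u) − Σ_{j=1}^d Ċ_j(u) α^⋆(s,t,u^{(j)}) and u^{(j)} ∈ [0,1]^d has all coordinates equal to 1 except the j-th, which equals u_j. -/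
/-!
Write `v` for the vector of marginal quantiles of `C_n^⋆ + n^{-1/2} α_n` at `(s,t,u)`, so that
`g_n(α_n)(s,t,u) = √n λ_n (C(v) - C(u)) + α_n(s,t,v)` (`gn_eq`).

The main point is that `√n λ_n (v_j - u_j) = - α(s,t,v^{(j)})` up to the error `sup |α_n - α|`
(`quantile_bound`), however small `λ_n` is; this is a statement about the generalized inverse of a
perturbed identity (`sInf_perturbation`) and relies on the continuity of the limit `α`.

Fix a tolerance `η` and let `δ` be a modulus of uniform continuity of `α` for it.

* If `t - s < δ`, then `α(s,t,·)` is within `η` of `α(s,s,·) = 0`. As `C` is `1`-Lipschitz in each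
  coordinate and `|Ċ_j| ≤ 1`, every term in `g_n(α_n) - g(α)` is `O(η)`.
* If `t - s ≥ δ`, then `λ_n ≥ δ/2` for large `n`, hence `v - u → 0` uniformly. The increment
  `C(v) - C(u)` is split into one-coordinate increments (`telescope`). For `u_j` away from `0` and
  `1` such an increment is `Ċ_j(u) (v_j - u_j)` up to a small relative error, since `Ċ_j` is
  uniformly continuous on compact sets avoiding the faces `u_j ∈ {0,1}` (`uniform_expansion`), and
  `term_expansion` applies. For `u_j` near `0` or `1` the section `α(s,t,u^{(j)})` is small, and the
  Lipschitz bound suffices again (`term_small`).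
-/

open Set Filter

namespace Stmt5

/-- `λ_n(s,t) = (⌊nt⌋ − ⌊ns⌋)/n`. -/
noncomputable def lam (n : ℕ) (s t : ℝ) : ℝ :=
  ((⌊(n : ℝ) * t⌋ : ℝ) - (⌊(n : ℝ) * s⌋ : ℝ)) / (n : ℝ)

/-- Membership in `E`: right-continuous nondecreasing maps `[0,1] → [0,1]`
with `G 0 = 0` and `G 1 = 1`. -/
def memE (G : ℝ → ℝ) : Prop :=
  (∀ x ∈ Icc (0 : ℝ) 1, G x ∈ Icc (0 : ℝ) 1) ∧
  MonotoneOn G (Icc (0 : ℝ) 1) ∧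
  (∀ x ∈ Ico (0 : ℝ) 1, ContinuousWithinAt G (Icc x 1) x) ∧
  G 0 = 0 ∧ G 1 = 1

/-- Membership in `E_n^⋆`. -/
def memEstar (n : ℕ) (F : ℝ → ℝ → ℝ → ℝ) : Prop :=
  (∀ s t u : ℝ, 0 ≤ s → s ≤ t → t ≤ 1 → u ∈ Icc (0 : ℝ) 1 →
    F s t u ∈ Icc (0 : ℝ) 1) ∧
  (∀ s t : ℝ, 0 ≤ s → s ≤ t → t ≤ 1 →
    ((⌊(n : ℝ) * s⌋ < ⌊(n : ℝ) * t⌋ → memE fun u => (lam n s t)⁻¹ * F s t u) ∧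
     (⌊(n : ℝ) * s⌋ = ⌊(n : ℝ) * t⌋ → ∀ u : ℝ, F s t u = 0)))

/-- `I_n(F^⋆)(s,t,u) = inf {v ∈ [0,1] : F^⋆(s,t,v) ≥ λ_n(s,t)·u}`. -/
noncomputable def In (n : ℕ) (F : ℝ → ℝ → ℝ → ℝ) (s t u : ℝ) : ℝ :=
  sInf {v : ℝ | v ∈ Icc (0 : ℝ) 1 ∧ lam n s t * u ≤ F s t v}

/-- The `j`-th marginal `H_j^⋆` of `H^⋆ : Δ × [0,1]^d → ℝ`. -/
def marg {d : ℕ} (H : ℝ → ℝ → (Fin d → ℝ) → ℝ) (j : Fin d) :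
    ℝ → ℝ → ℝ → ℝ :=
  fun s t u => H s t fun i => if i = j then u else 1

/-- Membership in `E_{n,d}^⋆`. -/
def memEstard (n d : ℕ) (H : ℝ → ℝ → (Fin d → ℝ) → ℝ) : Prop :=
  (∀ (s t : ℝ) (u : Fin d → ℝ), 0 ≤ s → s ≤ t → t ≤ 1 →
    (∀ j, u j ∈ Icc (0 : ℝ) 1) → H s t u ∈ Icc (0 : ℝ) 1) ∧
  (∀ j : Fin d, memEstar n (marg H j))

/-- `C_n^⋆(s,t,u) = λ_n(s,t) C(u)`. -/
noncomputable def Cstar (n d : ℕ) (C : (Fin d → ℝ) → ℝ) :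
    ℝ → ℝ → (Fin d → ℝ) → ℝ :=
  fun s t u => lam n s t * C u

/-- Membership in `D^⋆`. -/
def memDstar (d : ℕ) (α : ℝ → ℝ → (Fin d → ℝ) → ℝ) : Prop :=
  (∃ M : ℝ, ∀ (s t : ℝ) (u : Fin d → ℝ), |α s t u| ≤ M) ∧
  (∀ (s : ℝ) (u : Fin d → ℝ), α s s u = 0) ∧
  (∀ (s t : ℝ) (u : Fin d → ℝ), 0 ≤ s → s < t → t ≤ 1 →
    ((∃ j, u j = 0) ∨ (∀ j, u j = 1)) → α s t u = 0)

/-- Membership in `D_n^⋆`. -/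
noncomputable def memDnstar (n d : ℕ) (C : (Fin d → ℝ) → ℝ)
    (α : ℝ → ℝ → (Fin d → ℝ) → ℝ) : Prop :=
  memDstar d α ∧
    memEstard n d fun s t u => Cstar n d C s t u + (Real.sqrt n)⁻¹ * α s t u

/-- Membership in `D_0^⋆`: continuous elements of `D^⋆`. -/
def memD0star (d : ℕ) (α : ℝ → ℝ → (Fin d → ℝ) → ℝ) : Prop :=
  memDstar d α ∧
    ContinuousOn (fun p : ℝ × ℝ × (Fin d → ℝ) => α p.1 p.2.1 p.2.2)
      {p : ℝ × ℝ × (Fin d → ℝ) |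
        0 ≤ p.1 ∧ p.1 ≤ p.2.1 ∧ p.2.1 ≤ 1 ∧ ∀ j, p.2.2 j ∈ Icc (0 : ℝ) 1}

/-- Uniform distance over `Δ × [0,1]^d`. -/
noncomputable def supDist (d : ℕ) (α β : ℝ → ℝ → (Fin d → ℝ) → ℝ) : ℝ :=
  sSup {x : ℝ | ∃ (s t : ℝ) (u : Fin d → ℝ),
    0 ≤ s ∧ s ≤ t ∧ t ≤ 1 ∧ (∀ j, u j ∈ Icc (0 : ℝ) 1) ∧
    x = |α s t u - β s t u|}


/-- `Φ_n(H^⋆)(s,t,u) = H^⋆(s,t, I_n(H_1^⋆)(s,t,u_1),…,I_n(H_d^⋆)(s,t,u_d))`. -/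
noncomputable def Phi (n d : ℕ) (H : ℝ → ℝ → (Fin d → ℝ) → ℝ) :
    ℝ → ℝ → (Fin d → ℝ) → ℝ :=
  fun s t u => H s t fun j => In n (marg H j) s t (u j)

/-- `g_n(α^⋆) = √n {Φ_n(C_n^⋆ + n^{−1/2} α^⋆) − C_n^⋆}`. -/
noncomputable def gn (n d : ℕ) (C : (Fin d → ℝ) → ℝ)
    (α : ℝ → ℝ → (Fin d → ℝ) → ℝ) : ℝ → ℝ → (Fin d → ℝ) → ℝ :=
  fun s t u => Real.sqrt n *
    (Phi n d (fun s' t' u' => Cstar n d C s' t' u' + (Real.sqrt n)⁻¹ * α s' t' u')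
        s t u
      - Cstar n d C s t u)

/-- `g(α^⋆)(s,t,u) = α^⋆(s,t,u) − Σ_j Ċ_j(u) α^⋆(s,t,u^{(j)})`. -/
noncomputable def gmap (d : ℕ) (Cdot : Fin d → (Fin d → ℝ) → ℝ)
    (α : ℝ → ℝ → (Fin d → ℝ) → ℝ) : ℝ → ℝ → (Fin d → ℝ) → ℝ :=
  fun s t u => α s t u -
    ∑ j : Fin d, Cdot j u * α s t (fun i => if i = j then u j else 1)

/-! ### Generalized inverses of perturbed identities -/

/-- If `F/l ∈ E` and `r (F x - l x)` is within `ε` of a continuous function `a` on `[0,1]`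
vanishing at `0`, then the generalized inverse `v` of `F/l` at `u` satisfies
`r l (v - u) ≈ - a v` up to the same `ε`. One inequality comes from `F v ≥ l u` (right continuity),
the other from `F x < l u` for `x < v` by letting `x ↑ v`, where continuity of `a` is used. -/
lemma sInf_perturbation {F a : ℝ → ℝ} {l r u ε : ℝ} (hl : 0 < l) (hr : 0 < r)
    (hε : 0 ≤ ε) (hu : u ∈ Icc (0 : ℝ) 1) (hE : memE fun x => l⁻¹ * F x)
    (ha : ContinuousOn a (Icc 0 1)) (ha0 : a 0 = 0)
    (hF : ∀ x ∈ Icc (0 : ℝ) 1, |r * (F x - l * x) - a x| ≤ ε) :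
    sInf {v : ℝ | v ∈ Icc (0 : ℝ) 1 ∧ l * u ≤ F v} ∈ Icc (0 : ℝ) 1 ∧
    |r * l * (sInf {v : ℝ | v ∈ Icc (0 : ℝ) 1 ∧ l * u ≤ F v} - u)
      + a (sInf {v : ℝ | v ∈ Icc (0 : ℝ) 1 ∧ l * u ≤ F v})| ≤ ε := by
  obtain ⟨-, hmono, hrc, hE0, hE1⟩ := hE
  have hiff : ∀ x, l * u ≤ F x ↔ u ≤ l⁻¹ * F x := by
    intro x
    rw [← div_eq_inv_mul, le_div_iff₀ hl, mul_comm]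
  set S : Set ℝ := {v : ℝ | v ∈ Icc (0 : ℝ) 1 ∧ l * u ≤ F v} with hS
  have h1S : (1 : ℝ) ∈ S := by
    refine ⟨by simp, (hiff 1).2 ?_⟩
    simp only at hE1
    rw [hE1]; exact hu.2
  have hbdd : BddBelow S := ⟨0, fun x hx => hx.1.1⟩
  set v := sInf S with hv
  have hv0 : 0 ≤ v := le_csInf ⟨1, h1S⟩ fun x hx => hx.1.1
  have hv1 : v ≤ 1 := csInf_le hbdd h1S
  have hvI : v ∈ Icc (0 : ℝ) 1 := ⟨hv0, hv1⟩
  have hvS : l * u ≤ F v := by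
    rcases hv1.eq_or_lt with h | h
    · rw [h]; exact h1S.2
    · rw [hiff]
      have hc : Tendsto (fun x => l⁻¹ * F x) (nhdsWithin v (Ioc v 1)) (nhds (l⁻¹ * F v)) :=
        (hrc v ⟨hv0, h⟩).mono Ioc_subset_Icc_self
      have hne : (nhdsWithin v (Ioc v 1)).NeBot := by
        rw [nhdsWithin_Ioc_eq_nhdsGT h]; infer_instance
      refine ge_of_tendsto hc ?_
      filter_upwards [self_mem_nhdsWithin] with x hx
      obtain ⟨y, hyS, hyx⟩ := exists_lt_of_csInf_lt ⟨1, h1S⟩ hx.1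
      exact ((hiff y).1 hyS.2).trans
        (hmono hyS.1 ⟨hv0.trans hx.1.le, hx.2⟩ hyx.le)
  refine ⟨hvI, ?_⟩
  have hup : r * l * (u - v) ≤ a v + ε := by
    have h1 := (abs_le.1 (hF v hvI)).2
    have h2 := mul_le_mul_of_nonneg_left hvS hr.le
    linarith
  have hlow : a v - ε ≤ r * l * (u - v) := by
    rcases hv0.eq_or_lt with h | h
    · rw [← h, ha0]
      have := mul_nonneg (mul_pos hr hl).le hu.1
      linarith
    · have hne : (nhdsWithin v (Ico 0 v)).NeBot := by
        rw [nhdsWithin_Ico_eq_nhdsLT h]; infer_instance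
      have hsub : Ico 0 v ⊆ Icc (0 : ℝ) 1 := fun x hx => ⟨hx.1, hx.2.le.trans hv1⟩
      have hc1 : Tendsto (fun x => a x - ε) (nhdsWithin v (Ico 0 v)) (nhds (a v - ε)) :=
        ((ha v hvI).mono hsub).sub_const ε
      have hc2 : Tendsto (fun x => r * l * (u - x)) (nhdsWithin v (Ico 0 v))
          (nhds (r * l * (u - v))) :=
        (Continuous.tendsto (by fun_prop) v).mono_left nhdsWithin_le_nhds
      refine le_of_tendsto_of_tendsto hc1 hc2 ?_
      filter_upwards [self_mem_nhdsWithin] with x hx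
      have hxS : x ∉ S := notMem_of_lt_csInf hx.2 hbdd
      have hlt : F x < l * u := by
        by_contra hcon
        exact hxS ⟨hsub hx, not_lt.1 hcon⟩
      have h1 := (abs_le.1 (hF x (hsub hx))).1
      have h2 := mul_le_mul_of_nonneg_left hlt.le hr.le
      linarith
  rw [abs_le]
  constructor <;> linarith

/-! ### Regularity of copulas -/

lemma update_mem_cube {d : ℕ} {u : Fin d → ℝ} (hu : ∀ i, u i ∈ Icc (0 : ℝ) 1) (j : Fin d)
    {a : ℝ} (ha : a ∈ Icc (0 : ℝ) 1) : ∀ i, Function.update u j a i ∈ Icc (0 : ℝ) 1 := by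
  intro i
  by_cases h : i = j
  · subst h; simpa using ha
  · simpa [h] using hu i

lemma marg_mem_cube {d : ℕ} (j : Fin d) {a : ℝ} (ha : a ∈ Icc (0 : ℝ) 1) :
    ∀ i : Fin d, (if i = j then a else 1) ∈ Icc (0 : ℝ) 1 := by
  intro i
  split_ifs
  · exact ha
  · simp

section Copula

variable {d : ℕ} {μ : MeasureTheory.Measure (Fin d → ℝ)}
  {C : (Fin d → ℝ) → ℝ}

lemma copula_margin (hμsupp : μ {x | ¬ ∀ j, x j ∈ Icc (0 : ℝ) 1} = 0)
    (hμmarg : ∀ j : Fin d, ∀ x ∈ Icc (0 : ℝ) 1, (μ {y | y j ≤ x}).toReal = x)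
    (hC : ∀ u : Fin d → ℝ, (∀ j, u j ∈ Icc (0 : ℝ) 1) →
      C u = (μ {x | ∀ j, x j ≤ u j}).toReal) (j : Fin d) {x : ℝ} (hx : x ∈ Icc (0 : ℝ) 1) :
    C (fun i => if i = j then x else 1) = x := by
  rw [hC _ (marg_mem_cube j hx)]
  conv_rhs => rw [← hμmarg j x hx]
  congr 1
  refine MeasureTheory.measure_congr ?_
  have hae : ∀ᵐ y ∂μ, ∀ j, y j ∈ Icc (0 : ℝ) 1 := hμsupp
  filter_upwards [hae] with y hy
  apply propext
  change (∀ i, y i ≤ if i = j then x else 1) ↔ y j ≤ x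
  constructor
  · intro h; simpa using h j
  · intro h i
    split_ifs with hi
    · rw [hi]; exact h
    · exact (hy i).2

lemma copula_update_mono_lip [MeasureTheory.IsProbabilityMeasure μ]
    (hμmarg : ∀ j : Fin d, ∀ x ∈ Icc (0 : ℝ) 1, (μ {y | y j ≤ x}).toReal = x)
    (hC : ∀ u : Fin d → ℝ, (∀ j, u j ∈ Icc (0 : ℝ) 1) →
      C u = (μ {x | ∀ j, x j ≤ u j}).toReal) {u : Fin d → ℝ}
    (hu : ∀ i, u i ∈ Icc (0 : ℝ) 1) (j : Fin d) {a b : ℝ} (ha : a ∈ Icc (0 : ℝ) 1)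
    (hb : b ∈ Icc (0 : ℝ) 1) (hab : a ≤ b) :
    C (Function.update u j a) ≤ C (Function.update u j b) ∧
    C (Function.update u j b) ≤ C (Function.update u j a) + (b - a) := by
  rw [hC _ (update_mem_cube hu j ha), hC _ (update_mem_cube hu j hb)]
  change μ.real _ ≤ μ.real _ ∧ μ.real _ ≤ μ.real _ + _
  constructor
  · refine MeasureTheory.measureReal_mono ?_
    intro x hx i
    refine (hx i).trans ?_
    by_cases h : i = j
    · subst h; simpa using hab
    · simp [h]
  · have hsub : {x : Fin d → ℝ | ∀ i, x i ≤ Function.update u j b i} ⊆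
        {x | ∀ i, x i ≤ Function.update u j a i} ∪ ({y | y j ≤ b} \ {y | y j ≤ a}) := by
      intro x hx
      by_cases hxa : x j ≤ a
      · left
        intro i
        by_cases h : i = j
        · subst h; simpa using hxa
        · simpa [h] using hx i
      · right
        exact ⟨by simpa using hx j, hxa⟩
    have hdiff : μ.real ({y : Fin d → ℝ | y j ≤ b} \ {y | y j ≤ a}) = b - a := by
      rw [MeasureTheory.measureReal_sdiff]
      · have h1 := hμmarg j b hb
        have h2 := hμmarg j a ha
        change μ.real _ = _ at h1
        change μ.real _ = _ at h2
        rw [h1, h2]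
      · intro y hy; exact le_trans hy hab
      · exact measurableSet_le (measurable_pi_apply j) measurable_const
    calc _ ≤ _ := MeasureTheory.measureReal_mono hsub
      _ ≤ _ := MeasureTheory.measureReal_union_le _ _
      _ = _ := by rw [hdiff]

lemma copula_update_lip [MeasureTheory.IsProbabilityMeasure μ]
    (hμmarg : ∀ j : Fin d, ∀ x ∈ Icc (0 : ℝ) 1, (μ {y | y j ≤ x}).toReal = x)
    (hC : ∀ u : Fin d → ℝ, (∀ j, u j ∈ Icc (0 : ℝ) 1) →
      C u = (μ {x | ∀ j, x j ≤ u j}).toReal) {u : Fin d → ℝ}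
    (hu : ∀ i, u i ∈ Icc (0 : ℝ) 1) (j : Fin d) {a b : ℝ} (ha : a ∈ Icc (0 : ℝ) 1)
    (hb : b ∈ Icc (0 : ℝ) 1) :
    |C (Function.update u j b) - C (Function.update u j a)| ≤ |b - a| := by
  rcases le_total a b with hab | hab
  · have := copula_update_mono_lip hμmarg hC hu j ha hb hab
    rw [abs_of_nonneg (by linarith), abs_of_nonneg (by linarith)]
    linarith
  · have := copula_update_mono_lip hμmarg hC hu j hb ha hab
    rw [abs_of_nonpos (by linarith), abs_of_nonpos (by linarith)]
    linarith

end Copula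

/-- A partial derivative on the cube of a coordinatewise `1`-Lipschitz function is at most `1` in absolute
value; at the faces `u j ∈ {0,1}` the bound holds by the convention `Cdot j u = 0`. -/
lemma abs_Cdot_le_one {d : ℕ} {C : (Fin d → ℝ) → ℝ} {Cdot : Fin d → (Fin d → ℝ) → ℝ}
    (hlip : ∀ u : Fin d → ℝ, (∀ i, u i ∈ Icc (0 : ℝ) 1) → ∀ j, ∀ a ∈ Icc (0 : ℝ) 1,
      ∀ b ∈ Icc (0 : ℝ) 1,
      |C (Function.update u j b) - C (Function.update u j a)| ≤ |b - a|)
    (hpd_deriv : ∀ (j : Fin d) (u : Fin d → ℝ), (∀ i, u i ∈ Icc (0 : ℝ) 1) →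
      u j ∈ Ioo (0 : ℝ) 1 →
      HasDerivWithinAt (fun v => C (Function.update u j v)) (Cdot j u)
        (Icc (0 : ℝ) 1) (u j))
    (hpd_zero : ∀ (j : Fin d) (u : Fin d → ℝ), u j = 0 ∨ u j = 1 → Cdot j u = 0)
    (j : Fin d) {u : Fin d → ℝ} (hu : ∀ i, u i ∈ Icc (0 : ℝ) 1) : |Cdot j u| ≤ 1 := by
  by_cases h : u j = 0 ∨ u j = 1
  · simp [hpd_zero j u h]
  · push Not at h
    have huj : u j ∈ Ioo (0 : ℝ) 1 :=
      ⟨lt_of_le_of_ne (hu j).1 (Ne.symm h.1), lt_of_le_of_ne (hu j).2 h.2⟩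
    have hnhds : Icc (0 : ℝ) 1 ∈ nhds (u j) := Icc_mem_nhds huj.1 huj.2
    have hder := (hpd_deriv j u hu huj).hasDerivAt hnhds
    refine hder.le_of_lip' zero_le_one ?_
    filter_upwards [hnhds] with x hx
    rw [one_mul]
    exact hlip u hu j (u j) (hu j) x hx

/-- Uniform first-order expansion of `C` in the `j`-th coordinate, away from the faces
`u j ∈ {0,1}`: the other coordinates `w` may be moved slightly as well. -/
lemma uniform_expansion {d : ℕ} {C : (Fin d → ℝ) → ℝ} {Cdot : Fin d → (Fin d → ℝ) → ℝ}
    (hpd_deriv : ∀ (j : Fin d) (u : Fin d → ℝ), (∀ i, u i ∈ Icc (0 : ℝ) 1) →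
      u j ∈ Ioo (0 : ℝ) 1 →
      HasDerivWithinAt (fun v => C (Function.update u j v)) (Cdot j u)
        (Icc (0 : ℝ) 1) (u j))
    (hpd_cont : ∀ j : Fin d,
      ContinuousOn (Cdot j)
        {u : Fin d → ℝ | (∀ i, u i ∈ Icc (0 : ℝ) 1) ∧ u j ∈ Ioo (0 : ℝ) 1})
    (j : Fin d) {κ η : ℝ} (hκ : 0 < κ) (hη : 0 < η) :
    ∃ ρ > 0, ∀ u w : Fin d → ℝ, (∀ i, u i ∈ Icc (0 : ℝ) 1) → (∀ i, w i ∈ Icc (0 : ℝ) 1) →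
      κ ≤ u j → u j ≤ 1 - κ → (∀ i, |w i - u i| < ρ) → ∀ x, |x - u j| < ρ →
      |C (Function.update w j x) - C (Function.update w j (u j)) - Cdot j u * (x - u j)|
        ≤ η * |x - u j| := by
  set K : Set (Fin d → ℝ) := {u | (∀ i, u i ∈ Icc (0 : ℝ) 1) ∧ u j ∈ Icc (κ / 2) (1 - κ / 2)}
    with hK
  have hKc : IsCompact K := by
    have h1 : IsCompact (Set.pi univ fun _ : Fin d => Icc (0 : ℝ) 1) :=
      isCompact_univ_pi fun _ => isCompact_Icc
    have h2 : IsClosed {u : Fin d → ℝ | u j ∈ Icc (κ / 2) (1 - κ / 2)} :=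
      isClosed_Icc.preimage (continuous_apply j)
    convert h1.inter_right h2 using 1
    ext u
    simp only [hK, Set.mem_inter_iff, Set.mem_pi, Set.mem_univ, true_imp_iff]
    rfl
  have hKcont : ContinuousOn (Cdot j) K := by
    refine (hpd_cont j).mono ?_
    rintro u ⟨h1, h2, h3⟩
    exact ⟨h1, by linarith, by linarith⟩
  obtain ⟨ρ, hρ, hunif⟩ := Metric.uniformContinuousOn_iff.1
    (hKc.uniformContinuousOn_of_continuous hKcont) η hη
  refine ⟨min ρ (κ / 2), lt_min hρ (by linarith), ?_⟩
  intro u w hu hw hκ1 hκ2 hwu x hx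
  have huK : u ∈ K := ⟨hu, by linarith, by linarith⟩
  -- Every point of the segment `update w j y` has its `j`-th coordinate well inside `(0,1)`.
  have hseg : ∀ y ∈ uIcc (u j) x, |y - u j| < min ρ (κ / 2) := by
    intro y hy
    exact (abs_sub_left_of_mem_uIcc hy).trans_lt hx
  have hmain : ∀ y ∈ uIcc (u j) x, HasDerivWithinAt
      (fun y => C (Function.update w j y) - Cdot j u * y)
      (Cdot j (Function.update w j y) - Cdot j u) (uIcc (u j) x) y ∧
      ‖Cdot j (Function.update w j y) - Cdot j u‖ ≤ η := by
    intro y hy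
    have hyρ := hseg y hy
    have hyκ := abs_lt.1 (hyρ.trans_le (min_le_right _ _))
    have hyI : y ∈ Icc (0 : ℝ) 1 := ⟨by linarith, by linarith⟩
    have hzc := update_mem_cube hw j hyI
    have hzK : Function.update w j y ∈ K := by
      refine ⟨hzc, ?_⟩
      simp only [Function.update_self]
      exact ⟨by linarith, by linarith⟩
    constructor
    · have h := hpd_deriv j (Function.update w j y) hzc
        (by simp only [Function.update_self]; exact ⟨by linarith, by linarith⟩)
      simp only [Function.update_idem, Function.update_self] at h
      have h' := (h.hasDerivAt (Icc_mem_nhds (by linarith) (by linarith))).fun_sub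
        ((hasDerivAt_id y).const_mul (Cdot j u))
      rw [mul_one] at h'
      exact h'.hasDerivWithinAt
    · rw [← Real.dist_eq] at *
      refine (hunif _ hzK _ huK ?_).le
      rw [dist_pi_lt_iff hρ]
      intro i
      rw [Real.dist_eq]
      by_cases h : i = j
      · subst h
        simp only [Function.update_self]
        exact hyρ.trans_le (min_le_left _ _)
      · simp only [Function.update_of_ne h]
        exact (hwu i).trans_le (min_le_left _ _)
  have hmv := (convex_uIcc (u j) x).norm_image_sub_le_of_norm_hasDerivWithin_le
    (fun y hy => (hmain y hy).1) (fun y hy => (hmain y hy).2) left_mem_uIcc right_mem_uIcc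
  rw [Real.norm_eq_abs, Real.norm_eq_abs] at hmv
  convert hmv using 2
  ring

/-- Changing coordinates one at a time: a uniform bound on each one-coordinate increment sums up
to a bound on the full increment `C v - C u`. -/
lemma telescope {d : ℕ} {C : (Fin d → ℝ) → ℝ} {u v c : Fin d → ℝ} {A η : ℝ}
    (h : ∀ (j : Fin d) (w : Fin d → ℝ), (∀ i, w i = u i ∨ w i = v i) →
      |A * (C (Function.update w j (v j)) - C (Function.update w j (u j))) + c j| ≤ η) :
    |A * (C v - C u) + ∑ j, c j| ≤ d * η := by
  have key : ∀ S : Finset (Fin d),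
      |A * (C (S.piecewise v u) - C u) + ∑ j ∈ S, c j| ≤ S.card * η := by
    intro S
    induction S using Finset.induction_on with
    | empty => simp
    | insert j S hj ih =>
      have hw : ∀ i, S.piecewise v u i = u i ∨ S.piecewise v u i = v i := by
        intro i
        by_cases hi : i ∈ S
        · right; simp [hi]
        · left; simp [hi]
      have hstep := h j (S.piecewise v u) hw
      have hself : Function.update (S.piecewise v u) j (u j) = S.piecewise v u := by
        rw [Function.update_eq_self_iff]; simp [hj]
      rw [hself] at hstep
      rw [Finset.piecewise_insert, Finset.sum_insert hj, Finset.card_insert_of_notMem hj]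
      push_cast
      calc _ = |(A * (C (Function.update (S.piecewise v u) j (v j)) - C (S.piecewise v u)) + c j)
              + (A * (C (S.piecewise v u) - C u) + ∑ j ∈ S, c j)| := by congr 1; ring
        _ ≤ _ := abs_add_le _ _
        _ ≤ _ := by linarith
  simpa using key Finset.univ

/-! ### The uniform distance and the scaling `λ_n` -/

lemma le_supDist {d : ℕ} {α β : ℝ → ℝ → (Fin d → ℝ) → ℝ} (hα : memDstar d α)
    (hβ : memDstar d β) {s t : ℝ} {u : Fin d → ℝ} (hs : 0 ≤ s) (hst : s ≤ t) (ht : t ≤ 1)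
    (hu : ∀ j, u j ∈ Icc (0 : ℝ) 1) : |α s t u - β s t u| ≤ supDist d α β := by
  obtain ⟨⟨M, hM⟩, -⟩ := hα
  obtain ⟨⟨N, hN⟩, -⟩ := hβ
  refine le_csSup ⟨M + N, ?_⟩ ⟨s, t, u, hs, hst, ht, hu, rfl⟩
  rintro x ⟨s, t, u, -, -, -, -, rfl⟩
  exact (abs_sub _ _).trans (add_le_add (hM s t u) (hN s t u))

lemma memDstar.eq_zero {d : ℕ} {α : ℝ → ℝ → (Fin d → ℝ) → ℝ} (hα : memDstar d α)
    {s t : ℝ} {u : Fin d → ℝ} (hs : 0 ≤ s) (hst : s ≤ t) (ht : t ≤ 1)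
    (hu : (∃ j, u j = 0) ∨ (∀ j, u j = 1)) : α s t u = 0 := by
  rcases hst.eq_or_lt with rfl | h
  · exact hα.2.1 s u
  · exact hα.2.2 s t u hs h ht hu

lemma lam_nonneg (n : ℕ) {s t : ℝ} (hst : s ≤ t) : 0 ≤ lam n s t := by
  unfold lam
  have : ⌊(n : ℝ) * s⌋ ≤ ⌊(n : ℝ) * t⌋ :=
    Int.floor_le_floor (mul_le_mul_of_nonneg_left hst n.cast_nonneg)
  have h : (⌊(n : ℝ) * s⌋ : ℝ) ≤ ⌊(n : ℝ) * t⌋ := by exact_mod_cast this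
  exact div_nonneg (by linarith) n.cast_nonneg

lemma lam_lower {n : ℕ} (hn : 1 ≤ n) (s t : ℝ) : t - s - 1 / n ≤ lam n s t := by
  have hn' : (0 : ℝ) < n := by exact_mod_cast hn
  unfold lam
  rw [le_div_iff₀ hn']
  have h1 := Int.lt_floor_add_one ((n : ℝ) * t)
  have h2 := Int.floor_le ((n : ℝ) * s)
  have h3 : (1 / (n : ℝ)) * n = 1 := by field_simp
  nlinarith

/-! ### Marginal quantiles -/

/-- `C_n^⋆ + n^{-1/2} β`, the function to which `Φ_n` is applied in `g_n(β)`. -/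
noncomputable def perturbed (n d : ℕ) (C : (Fin d → ℝ) → ℝ) (β : ℝ → ℝ → (Fin d → ℝ) → ℝ) :
    ℝ → ℝ → (Fin d → ℝ) → ℝ :=
  fun s t u => Cstar n d C s t u + (Real.sqrt n)⁻¹ * β s t u

lemma continuousOn_section {d : ℕ} {α : ℝ → ℝ → (Fin d → ℝ) → ℝ} (hα : memD0star d α)
    {s t : ℝ} (hs : 0 ≤ s) (hst : s ≤ t) (ht : t ≤ 1) (j : Fin d) :
    ContinuousOn (fun x : ℝ => α s t fun i => if i = j then x else 1) (Icc 0 1) := by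
  have hg : Continuous fun x : ℝ => (s, t, fun i : Fin d => if i = j then x else (1 : ℝ)) := by
    refine continuous_const.prodMk (continuous_const.prodMk (continuous_pi fun i => ?_))
    by_cases h : i = j
    · simp only [h, if_true]; exact continuous_id
    · simpa [h] using continuous_const
  exact hα.2.comp hg.continuousOn fun x hx => ⟨hs, hst, ht, marg_mem_cube j hx⟩

/-- The marginal quantiles `v` of `perturbed n d C β` satisfy `√n λ_n (v - u) ≈ - α_j(s,t,v)`,
with the uniform distance of `β` and `α` as error. If `⌊ns⌋ = ⌊nt⌋` then `λ_n = 0` and the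
quantile is `0`, where `α` vanishes, so that no separate treatment of this case is needed later. -/
lemma quantile_bound {n d : ℕ} (hn : 1 ≤ n) {C : (Fin d → ℝ) → ℝ}
    {β α : ℝ → ℝ → (Fin d → ℝ) → ℝ}
    (hmargin : ∀ (j : Fin d), ∀ x ∈ Icc (0 : ℝ) 1, C (fun i => if i = j then x else 1) = x)
    (hβ : memDnstar n d C β) (hα : memD0star d α) {ε s t : ℝ} (hε : 0 ≤ ε) (hs : 0 ≤ s)
    (hst : s ≤ t) (ht : t ≤ 1)
    (hdist : ∀ u : Fin d → ℝ, (∀ j, u j ∈ Icc (0 : ℝ) 1) → |β s t u - α s t u| ≤ ε)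
    (j : Fin d) {u : ℝ} (hu : u ∈ Icc (0 : ℝ) 1) :
    In n (marg (perturbed n d C β) j) s t u ∈ Icc (0 : ℝ) 1 ∧
    |Real.sqrt n * lam n s t * (In n (marg (perturbed n d C β) j) s t u - u)
      + α s t (fun i => if i = j then In n (marg (perturbed n d C β) j) s t u else 1)| ≤ ε := by
  have hn' : (0 : ℝ) < n := by exact_mod_cast hn
  have hr : 0 < Real.sqrt n := Real.sqrt_pos.2 hn'
  have hE := (hβ.2.2 j).2 s t hs hst ht
  have hα0 : α s t (fun i => if i = j then 0 else 1) = 0 :=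
    hα.1.eq_zero hs hst ht (Or.inl ⟨j, by simp⟩)
  have hfloor : ⌊(n : ℝ) * s⌋ ≤ ⌊(n : ℝ) * t⌋ :=
    Int.floor_le_floor (mul_le_mul_of_nonneg_left hst n.cast_nonneg)
  rcases hfloor.eq_or_lt with h | h
  · have hlam : lam n s t = 0 := by simp [lam, h]
    have hzero : In n (marg (perturbed n d C β) j) s t u = 0 := by
      have hF : ∀ v, marg (perturbed n d C β) j s t v = 0 := hE.2 h
      unfold In
      simp only [hF, hlam, zero_mul, le_refl, and_true]
      exact csInf_Icc zero_le_one
    rw [hzero, hlam, hα0]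
    simpa using hε
  · have hlam : 0 < lam n s t := by
      unfold lam
      have h' : (⌊(n : ℝ) * s⌋ : ℝ) < ⌊(n : ℝ) * t⌋ := by exact_mod_cast h
      exact div_pos (by linarith) hn'
    refine sInf_perturbation (F := marg (perturbed n d C β) j s t)
      (a := fun x => α s t fun i => if i = j then x else 1) hlam hr hε hu (hE.1 h)
      (continuousOn_section hα hs hst ht j) hα0 ?_
    intro x hx
    have hb := hdist _ (marg_mem_cube j hx)
    convert hb using 2
    simp only [marg, perturbed, Cstar, hmargin j x hx]
    field_simp
    ring

/-- With `v` the vector of marginal quantiles, `g_n(β) = √n λ_n (C(v) - C(u)) + β(v)`. -/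
lemma gn_eq {n d : ℕ} (hn : 1 ≤ n) (C : (Fin d → ℝ) → ℝ) (β : ℝ → ℝ → (Fin d → ℝ) → ℝ)
    (s t : ℝ) (u : Fin d → ℝ) :
    gn n d C β s t u = Real.sqrt n * lam n s t *
      (C (fun j => In n (marg (perturbed n d C β) j) s t (u j)) - C u)
      + β s t (fun j => In n (marg (perturbed n d C β) j) s t (u j)) := by
  have hn' : (0 : ℝ) < n := by exact_mod_cast hn
  have hr : Real.sqrt n ≠ 0 := (Real.sqrt_pos.2 hn').ne'
  change Real.sqrt n * ((lam n s t * C _ + (Real.sqrt n)⁻¹ * β s t _) - lam n s t * C u) = _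
  rw [mul_sub, mul_add, mul_inv_cancel_left₀ hr]
  unfold perturbed
  ring

/-! ### Uniform continuity of the limit -/

lemma uniform_continuity {d : ℕ} {α : ℝ → ℝ → (Fin d → ℝ) → ℝ} (hα : memD0star d α)
    {η : ℝ} (hη : 0 < η) :
    ∃ δ > 0, ∀ (s t t' : ℝ) (u v : Fin d → ℝ), 0 ≤ s → s ≤ t → t ≤ 1 → s ≤ t' → t' ≤ 1 →
      (∀ i, u i ∈ Icc (0 : ℝ) 1) → (∀ i, v i ∈ Icc (0 : ℝ) 1) →
      |t - t'| < δ → (∀ i, |u i - v i| < δ) → |α s t u - α s t' v| ≤ η := by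
  have hK : IsCompact {p : ℝ × ℝ × (Fin d → ℝ) |
      0 ≤ p.1 ∧ p.1 ≤ p.2.1 ∧ p.2.1 ≤ 1 ∧ ∀ j, p.2.2 j ∈ Icc (0 : ℝ) 1} := by
    have h1 : IsCompact ((Icc (0 : ℝ) 1) ×ˢ ((Icc (0 : ℝ) 1) ×ˢ
        (Set.pi univ fun _ : Fin d => Icc (0 : ℝ) 1))) :=
      isCompact_Icc.prod (isCompact_Icc.prod (isCompact_univ_pi fun _ => isCompact_Icc))
    have h2 : IsClosed {p : ℝ × ℝ × (Fin d → ℝ) | p.1 ≤ p.2.1} :=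
      isClosed_le (by fun_prop) (by fun_prop)
    convert h1.inter_right h2 using 1
    ext ⟨s, t, u⟩
    change (0 ≤ s ∧ s ≤ t ∧ t ≤ 1 ∧ ∀ j, u j ∈ Icc (0 : ℝ) 1) ↔
      ((s ∈ Icc (0 : ℝ) 1 ∧ t ∈ Icc (0 : ℝ) 1 ∧ ∀ j ∈ univ, u j ∈ Icc (0 : ℝ) 1) ∧ s ≤ t)
    constructor
    · rintro ⟨h1, h2, h3, h4⟩
      exact ⟨⟨⟨h1, h2.trans h3⟩, ⟨h1.trans h2, h3⟩, fun j _ => h4 j⟩, h2⟩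
    · rintro ⟨⟨h1, h2, h3⟩, h4⟩
      exact ⟨h1.1, h4, h2.2, fun j => h3 j (mem_univ j)⟩
  obtain ⟨δ, hδ, h⟩ := Metric.uniformContinuousOn_iff.1
    (hK.uniformContinuousOn_of_continuous hα.2) η hη
  refine ⟨δ, hδ, fun s t t' u v hs hst ht hst' ht' hu hv htt huv => ?_⟩
  refine (h (s, t, u) ⟨hs, hst, ht, hu⟩ (s, t', v) ⟨hs, hst', ht', hv⟩ ?_).le
  rw [Prod.dist_eq, Prod.dist_eq, max_lt_iff, max_lt_iff]
  exact ⟨by simpa using hδ, htt, (dist_pi_lt_iff hδ).2 huv⟩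

/-! ### One-coordinate estimates -/

/-- Where `a = α_j(s,t,·)` is small at both `u j` and `v j`, the increment of `C` and the
corresponding term of `g(α)` are both small; only the Lipschitz property of `C` is used.
Here `ΔC` is the increment of `C` and `q` the value of `Ċ_j`. -/
lemma term_small {A ΔC q au av δ η ε : ℝ} (hlip : |ΔC| ≤ |δ|) (hq : |q| ≤ 1)
    (hb : |A * δ + av| ≤ ε) (hau : |au| ≤ η) (hav : |av| ≤ η) :
    |A * ΔC + q * au| ≤ ε + 2 * η := by
  have h1 : |A * ΔC| ≤ |A * δ| := by
    rw [abs_mul, abs_mul]; exact mul_le_mul_of_nonneg_left hlip (abs_nonneg _)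
  have h2 : |A * δ| ≤ ε + η := by
    calc |A * δ| = |(A * δ + av) - av| := by congr 1; ring
      _ ≤ |A * δ + av| + |av| := abs_sub _ _
      _ ≤ _ := add_le_add hb hav
  have h3 : |q * au| ≤ η := by
    rw [abs_mul]
    exact (mul_le_of_le_one_left (abs_nonneg _) hq).trans hau
  linarith [abs_add_le (A * ΔC) (q * au)]

/-- Where the first-order expansion of `C` is available, the increment of `C` is close to
`q δ`, and `A δ` is close to `-av`, which is close to `-au`. -/
lemma term_expansion {A ΔC q au av δ η ε M : ℝ} (hA : 0 ≤ A) (hη : 0 ≤ η) (hq : |q| ≤ 1)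
    (hexp : |ΔC - q * δ| ≤ η * |δ|) (hb : |A * δ + av| ≤ ε) (hav : |av| ≤ M)
    (hau : |au - av| ≤ η) :
    |A * ΔC + q * au| ≤ η * (M + ε) + (ε + η) := by
  have h2 : A * |δ| ≤ M + ε := by
    calc A * |δ| = |A * δ| := by rw [abs_mul, abs_of_nonneg hA]
      _ = |(A * δ + av) - av| := by congr 1; ring
      _ ≤ |A * δ + av| + |av| := abs_sub _ _
      _ ≤ _ := by linarith
  have h1 : |A * (ΔC - q * δ)| ≤ η * (M + ε) := by
    rw [abs_mul, abs_of_nonneg hA]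
    calc A * |ΔC - q * δ| ≤ A * (η * |δ|) := mul_le_mul_of_nonneg_left hexp hA
      _ = η * (A * |δ|) := by ring
      _ ≤ _ := mul_le_mul_of_nonneg_left h2 hη
  have h3 : |q * ((A * δ + av) + (au - av))| ≤ ε + η := by
    rw [abs_mul]
    refine (mul_le_of_le_one_left (abs_nonneg _) hq).trans ?_
    exact (abs_add_le _ _).trans (add_le_add hb hau)
  calc |A * ΔC + q * au| = |A * (ΔC - q * δ) + q * ((A * δ + av) + (au - av))| := by
        congr 1; ring
    _ ≤ _ := abs_add_le _ _
    _ ≤ _ := add_le_add h1 h3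

/-- If `C` satisfies Condition (pd) and `α_n^⋆ ∈ D_n^⋆` converges
uniformly on `Δ × [0,1]^d` to `α^⋆ ∈ D_0^⋆`, then
`sup_{Δ×[0,1]^d} |g_n(α_n^⋆) − g(α^⋆)| → 0`. -/
theorem gn_continuously_converges_to_g
    (d : ℕ) (hd : 1 ≤ d)
    (μ : MeasureTheory.Measure (Fin d → ℝ)) [MeasureTheory.IsProbabilityMeasure μ]
    (hμsupp : μ {x | ¬ ∀ j, x j ∈ Icc (0 : ℝ) 1} = 0)
    (hμmarg : ∀ j : Fin d, ∀ x ∈ Icc (0 : ℝ) 1, (μ {y | y j ≤ x}).toReal = x)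
    (C : (Fin d → ℝ) → ℝ)
    (hC : ∀ u : Fin d → ℝ, (∀ j, u j ∈ Icc (0 : ℝ) 1) →
      C u = (μ {x | ∀ j, x j ≤ u j}).toReal)
    -- Condition (pd)
    (Cdot : Fin d → (Fin d → ℝ) → ℝ)
    (hpd_deriv : ∀ (j : Fin d) (u : Fin d → ℝ), (∀ i, u i ∈ Icc (0 : ℝ) 1) →
      u j ∈ Ioo (0 : ℝ) 1 →
      HasDerivWithinAt (fun v => C (Function.update u j v)) (Cdot j u)
        (Icc (0 : ℝ) 1) (u j))
    (hpd_cont : ∀ j : Fin d,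
      ContinuousOn (Cdot j)
        {u : Fin d → ℝ | (∀ i, u i ∈ Icc (0 : ℝ) 1) ∧ u j ∈ Ioo (0 : ℝ) 1})
    (hpd_zero : ∀ (j : Fin d) (u : Fin d → ℝ), u j = 0 ∨ u j = 1 → Cdot j u = 0)
    (α : ℕ → ℝ → ℝ → (Fin d → ℝ) → ℝ) (αlim : ℝ → ℝ → (Fin d → ℝ) → ℝ)
    (hα : ∀ n : ℕ, 1 ≤ n → memDnstar n d C (α n))
    (hαlim : memD0star d αlim)
    (hconv : Tendsto (fun n => supDist d (α n) αlim) atTop (nhds 0)) :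
    Tendsto (fun n : ℕ => supDist d (gn n d C (α n)) (gmap d Cdot αlim))
      atTop (nhds 0) := by
  have hlip : ∀ u : Fin d → ℝ, (∀ i, u i ∈ Icc (0 : ℝ) 1) → ∀ j, ∀ a ∈ Icc (0 : ℝ) 1,
      ∀ b ∈ Icc (0 : ℝ) 1,
      |C (Function.update u j b) - C (Function.update u j a)| ≤ |b - a| :=
    fun u hu j a ha b hb => copula_update_lip hμmarg hC hu j ha hb
  have hmargin : ∀ (j : Fin d), ∀ x ∈ Icc (0 : ℝ) 1, C (fun i => if i = j then x else 1) = x :=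
    fun j x hx => copula_margin hμsupp hμmarg hC j hx
  obtain ⟨M, hM⟩ := hαlim.1.1
  have hM0 : 0 ≤ M := (abs_nonneg _).trans (hM 0 0 0)
  rw [Metric.tendsto_atTop]
  intro e he
  -- `K η` will bound the distance once `supDist ≤ η ≤ 1` and `n` is large.
  set K : ℝ := 3 + d * (M + 4) with hK
  have hKpos : 0 < K := by positivity
  set η : ℝ := min 1 (e / (2 * K)) with hηdef
  have hη : 0 < η := lt_min one_pos (by positivity)
  have hη1 : η ≤ 1 := min_le_left _ _
  have hKη : K * η ≤ e / 2 := by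
    calc K * η ≤ K * (e / (2 * K)) := mul_le_mul_of_nonneg_left (min_le_right _ _) hKpos.le
      _ = e / 2 := by field_simp
  obtain ⟨δ, hδ, hunif⟩ := uniform_continuity hαlim hη
  have hexp := fun j => uniform_expansion hpd_deriv hpd_cont j (half_pos hδ) hη
  choose ρf hρf hexp using hexp
  have : Nonempty (Fin d) := ⟨⟨0, hd⟩⟩
  obtain ⟨j₀, hj₀⟩ := Finite.exists_min ρf
  set ρ : ℝ := min (ρf j₀) (δ / 2) with hρdef
  have hρ : 0 < ρ := lt_min (hρf j₀) (half_pos hδ)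
  have hsqrt : Tendsto (fun n : ℕ => Real.sqrt n) atTop atTop :=
    Real.tendsto_sqrt_atTop.comp tendsto_natCast_atTop_atTop
  have hev : ∀ᶠ n : ℕ in atTop, 1 ≤ n ∧ 2 / δ ≤ n ∧ (M + 1) / (ρ * (δ / 2)) < Real.sqrt n ∧
      supDist d (α n) αlim < η :=
    (eventually_ge_atTop 1).and ((tendsto_natCast_atTop_atTop.eventually_ge_atTop _).and
      ((hsqrt.eventually_gt_atTop _).and (hconv.eventually_lt_const hη)))
  obtain ⟨N, hN⟩ := eventually_atTop.1 hev
  refine ⟨N, fun n hnN => ?_⟩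
  obtain ⟨hn, hnδ, hnρ, hdist⟩ := hN n hnN
  have hn' : (0 : ℝ) < n := by exact_mod_cast hn
  have hnonneg : 0 ≤ supDist d (gn n d C (α n)) (gmap d Cdot αlim) := by
    refine Real.sSup_nonneg ?_
    rintro x ⟨s, t, u, -, -, -, -, rfl⟩
    exact abs_nonneg _
  rw [Real.dist_eq, sub_zero, abs_of_nonneg hnonneg]
  suffices hle : supDist d (gn n d C (α n)) (gmap d Cdot αlim) ≤ K * η by linarith
  refine Real.sSup_le ?_ (by positivity)
  rintro x ⟨s, t, u, hs, hst, ht, hu, rfl⟩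
  have hα_dist : ∀ u : Fin d → ℝ, (∀ j, u j ∈ Icc (0 : ℝ) 1) →
      |α n s t u - αlim s t u| ≤ η := fun u hu =>
    (le_supDist (hα n hn).1 hαlim.1 hs hst ht hu).trans hdist.le
  have hq := fun j => quantile_bound hn hmargin (hα n hn) hαlim hη.le hs hst ht hα_dist j (hu j)
  rw [gn_eq hn]
  set v : Fin d → ℝ := fun j => In n (marg (perturbed n d C (α n)) j) s t (u j) with hv
  have hvI : ∀ j, v j ∈ Icc (0 : ℝ) 1 := fun j => (hq j).1
  have hvb : ∀ j, |Real.sqrt n * lam n s t * (v j - u j)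
      + αlim s t (fun i => if i = j then v j else 1)| ≤ η := fun j => (hq j).2
  clear_value v
  have hlam := lam_nonneg n hst
  set A : ℝ := Real.sqrt n * lam n s t with hA
  have hA0 : 0 ≤ A := mul_nonneg (Real.sqrt_nonneg _) hlam
  have hCdot := fun j => abs_Cdot_le_one hlip hpd_deriv hpd_zero j hu
  have hwI : ∀ w : Fin d → ℝ, (∀ i, w i = u i ∨ w i = v i) → ∀ i, w i ∈ Icc (0 : ℝ) 1 := by
    intro w hw i
    rcases hw i with h | h
    · rw [h]; exact hu i
    · rw [h]; exact hvI i
  have hfinal : |αlim s t v - αlim s t u| ≤ 2 * η ∧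
      ∀ (j : Fin d) (w : Fin d → ℝ), (∀ i, w i = u i ∨ w i = v i) →
      |A * (C (Function.update w j (v j)) - C (Function.update w j (u j)))
        + Cdot j u * αlim s t (fun i => if i = j then u j else 1)| ≤ (M + 4) * η := by
    have hMη : 0 ≤ M * η := mul_nonneg hM0 hη.le
    rcases lt_or_ge (t - s) δ with hδst | hδst
    · -- Near the diagonal `s = t` the limit itself is small.
      have hsmall : ∀ x : Fin d → ℝ, (∀ i, x i ∈ Icc (0 : ℝ) 1) → |αlim s t x| ≤ η := by
        intro x hx
        have h := hunif s t s x x hs hst ht le_rfl (hst.trans ht) hx hx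
          (by rwa [abs_of_nonneg (by linarith)]) (fun i => by simpa using hδ)
        rwa [hαlim.1.2.1 s x, sub_zero] at h
      refine ⟨?_, fun j w hw => ?_⟩
      · have := abs_sub (αlim s t v) (αlim s t u)
        linarith [hsmall v hvI, hsmall u hu]
      · have := term_small (hlip w (hwI w hw) j (u j) (hu j) (v j) (hvI j)) (hCdot j)
          (hvb j) (hsmall _ (marg_mem_cube j (hu j))) (hsmall _ (marg_mem_cube j (hvI j)))
        linarith
    · -- Away from the diagonal `λ_n ≥ δ/2`, so that the quantiles converge uniformly.
      have hlam2 : δ / 2 ≤ lam n s t := by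
        have h1 := lam_lower hn s t
        have h2 : 1 / (n : ℝ) ≤ δ / 2 := by
          rw [div_le_iff₀ hδ] at hnδ
          rw [div_le_div_iff₀ hn' two_pos]
          linarith
        linarith
      have hAρ : M + 1 < ρ * A := by
        rw [div_lt_iff₀ (by positivity)] at hnρ
        have h1 : Real.sqrt n * (δ / 2) ≤ A :=
          mul_le_mul_of_nonneg_left hlam2 (Real.sqrt_nonneg _)
        have h2 := mul_le_mul_of_nonneg_left h1 hρ.le
        linarith
      have hclose : ∀ j, |v j - u j| < ρ := by
        intro j
        have h1 : A * |v j - u j| ≤ M + 1 := by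
          calc A * |v j - u j| = |A * (v j - u j)| := by rw [abs_mul, abs_of_nonneg hA0]
            _ = |(A * (v j - u j) + αlim s t (fun i => if i = j then v j else 1))
                  - αlim s t (fun i => if i = j then v j else 1)| := by congr 1; ring
            _ ≤ _ := abs_sub _ _
            _ ≤ M + 1 := by linarith [hvb j, hM s t (fun i => if i = j then v j else 1)]
        by_contra hcon
        have h2 := mul_le_mul_of_nonneg_left (not_lt.1 hcon) hA0
        linarith
      have hcloseδ : ∀ j, |v j - u j| < δ / 2 := fun j => (hclose j).trans_le (min_le_right _ _)
      have hmarg_close : ∀ (j : Fin d) (x y : ℝ), x ∈ Icc (0 : ℝ) 1 → y ∈ Icc (0 : ℝ) 1 →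
          |x - y| < δ → |αlim s t (fun i => if i = j then x else 1)
            - αlim s t (fun i => if i = j then y else 1)| ≤ η := by
        intro j x y hx hy hxy
        refine hunif s t t _ _ hs hst ht hst ht (marg_mem_cube j hx) (marg_mem_cube j hy)
          (by simpa using hδ) (fun i => ?_)
        by_cases h : i = j
        · simpa [h] using hxy
        · simpa [h] using hδ
      refine ⟨?_, fun j w hw => ?_⟩
      · have := hunif s t t v u hs hst ht hst ht hvI hu (by simpa using hδ)
          (fun i => (hcloseδ i).trans (by linarith))
        linarith
      · have hvj := abs_lt.1 (hcloseδ j)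
        -- Near the faces `u j ∈ {0,1}`, where `Cdot j` may be discontinuous, the marginal
        -- section of the limit is within `η` of its value `0` at the face.
        have hface : ∀ b ∈ Icc (0 : ℝ) 1, αlim s t (fun i => if i = j then b else 1) = 0 →
            |u j - b| < δ → |v j - b| < δ →
            |A * (C (Function.update w j (v j)) - C (Function.update w j (u j)))
              + Cdot j u * αlim s t (fun i => if i = j then u j else 1)| ≤ (M + 4) * η := by
          intro b hb hb0 hub hvb'
          have h1 := hmarg_close j _ _ (hu j) hb hub
          have h2 := hmarg_close j _ _ (hvI j) hb hvb'
          rw [hb0, sub_zero] at h1 h2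
          have := term_small (hlip w (hwI w hw) j (u j) (hu j) (v j) (hvI j)) (hCdot j)
            (hvb j) h1 h2
          linarith
        rcases lt_or_ge (u j) (δ / 2) with h0 | h0
        · refine hface 0 (by simp) (hαlim.1.eq_zero hs hst ht (Or.inl ⟨j, by simp⟩)) ?_ ?_
          · rw [abs_lt]; constructor <;> linarith [(hu j).1]
          · rw [abs_lt]; constructor <;> linarith [(hvI j).1]
        rcases lt_or_ge (1 - δ / 2) (u j) with h1 | h1
        · refine hface 1 (by simp) (hαlim.1.eq_zero hs hst ht (Or.inr fun i => by simp)) ?_ ?_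
          · rw [abs_lt]; constructor <;> linarith [(hu j).2]
          · rw [abs_lt]; constructor <;> linarith [(hvI j).2]
        have hρj : ρ ≤ ρf j := (min_le_left _ _).trans (hj₀ j)
        have hwu : ∀ i, |w i - u i| < ρf j := by
          intro i
          rcases hw i with h | h
          · rw [h, sub_self, abs_zero]; exact hρf j
          · rw [h]; exact (hclose i).trans_le hρj
        have hx := hexp j u w hu (hwI w hw) h0 h1 hwu (v j) ((hclose j).trans_le hρj)
        have := term_expansion hA0 hη.le (hCdot j) hx (hvb j)
          (hM s t (fun i => if i = j then v j else 1))
          (hmarg_close j _ _ (hu j) (hvI j) (by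
            rw [abs_sub_comm]; exact (hcloseδ j).trans (by linarith)))
        have hηη : η * η ≤ η := mul_le_of_le_one_left hη.le hη1
        linarith
  have htel := telescope (C := C) hfinal.2
  calc |A * (C v - C u) + α n s t v - gmap d Cdot αlim s t u|
      = |(A * (C v - C u) + ∑ j, Cdot j u * αlim s t (fun i => if i = j then u j else 1))
          + ((α n s t v - αlim s t v) + (αlim s t v - αlim s t u))| := by
        unfold gmap
        congr 1
        ring
    _ ≤ |A * (C v - C u) + ∑ j, Cdot j u * αlim s t (fun i => if i = j then u j else 1)|
          + (|α n s t v - αlim s t v| + |αlim s t v - αlim s t u|) :=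
        (abs_add_le _ _).trans (add_le_add_right (abs_add_le _ _) _)
    _ ≤ d * ((M + 4) * η) + (η + 2 * η) :=
        add_le_add htel (add_le_add (hα_dist v hvI) hfinal.1)
    _ = K * η := by rw [hK]; ring

end Stmt5
end

section
/- Let C be a d-dimensional copula. If α_n^⋆ ∈ D_n^⋆ for every n and α^⋆ ∈ D_0^⋆ are such that sup_{Δ×[0,1]^d} |α_n^⋆ − α^⋆| → 0, then for every j ∈ {1,…,d}, sup_{(s,t,u)∈Δ×[0,1]} | √n λ_n(s,t) { I_n(U_n^⋆ + n^{−1/2} α_{n,j}^⋆)(s,t,u) − u } + α_j^⋆(s,t,u) | → 0 as n → ∞. -/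
/-!
Fix `(s,t)` and `n`, and write `λ = λ_n(s,t)`, `a = α_{n,j}(s,t,·)`, `b = α_j(s,t,·)` and
`w = I_n(U_n + n^{-1/2} α_{n,j})(s,t,u)`, the generalized inverse at `u` of
`v ↦ λ v + n^{-1/2} a(v)`.

If `λ = 0`, then `a ≡ 0` because `α_n ∈ D_n^⋆`, so the quantity to bound is `|b(u)| = |b(u) - a(u)|`.

If `λ > 0`, points of the set defining `w` satisfy `√n λ (v - u) + a(v) ≥ 0`, and points to the left
of `w` satisfy the reverse inequality. Replacing `a` by the continuous function `b` costs
`ε = sup |a - b|`, and letting `v → w` from each side gives `|√n λ (w - u) + b(w)| ≤ ε`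
(`abs_inverse_add_le`). It remains to compare `b(w)` with `b(u)`. As `b` is bounded by some `M`,
`√n λ |w - u| ≤ M + ε`; hence either `√n λ` is large, so that `w` is close to `u` and uniform
continuity of the limit applies, or `√n λ` is bounded, so that `t - s ≤ λ + 1/n` is small and both
`b(w)` and `b(u)` are close to the value `0` taken on the diagonal `s = t`.
-/

open Set Filter

namespace Stmt6

/-- `λ_n(s,t) = (⌊nt⌋ − ⌊ns⌋)/n`. -/
noncomputable def lam (n : ℕ) (s t : ℝ) : ℝ :=
  ((⌊(n : ℝ) * t⌋ : ℝ) - (⌊(n : ℝ) * s⌋ : ℝ)) / (n : ℝ)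

/-- Membership in `E`: right-continuous nondecreasing maps `[0,1] → [0,1]`
with `G 0 = 0` and `G 1 = 1`. -/
def memE (G : ℝ → ℝ) : Prop :=
  (∀ x ∈ Icc (0 : ℝ) 1, G x ∈ Icc (0 : ℝ) 1) ∧
  MonotoneOn G (Icc (0 : ℝ) 1) ∧
  (∀ x ∈ Ico (0 : ℝ) 1, ContinuousWithinAt G (Icc x 1) x) ∧
  G 0 = 0 ∧ G 1 = 1

/-- Membership in `E_n^⋆`. -/
def memEstar (n : ℕ) (F : ℝ → ℝ → ℝ → ℝ) : Prop :=
  (∀ s t u : ℝ, 0 ≤ s → s ≤ t → t ≤ 1 → u ∈ Icc (0 : ℝ) 1 →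
    F s t u ∈ Icc (0 : ℝ) 1) ∧
  (∀ s t : ℝ, 0 ≤ s → s ≤ t → t ≤ 1 →
    ((⌊(n : ℝ) * s⌋ < ⌊(n : ℝ) * t⌋ → memE fun u => (lam n s t)⁻¹ * F s t u) ∧
     (⌊(n : ℝ) * s⌋ = ⌊(n : ℝ) * t⌋ → ∀ u : ℝ, F s t u = 0)))

/-- `I_n(F^⋆)(s,t,u) = inf {v ∈ [0,1] : F^⋆(s,t,v) ≥ λ_n(s,t)·u}`. -/
noncomputable def In (n : ℕ) (F : ℝ → ℝ → ℝ → ℝ) (s t u : ℝ) : ℝ :=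
  sInf {v : ℝ | v ∈ Icc (0 : ℝ) 1 ∧ lam n s t * u ≤ F s t v}

/-- The `j`-th marginal `H_j^⋆` of `H^⋆ : Δ × [0,1]^d → ℝ`. -/
def marg {d : ℕ} (H : ℝ → ℝ → (Fin d → ℝ) → ℝ) (j : Fin d) :
    ℝ → ℝ → ℝ → ℝ :=
  fun s t u => H s t fun i => if i = j then u else 1

/-- Membership in `E_{n,d}^⋆`. -/
def memEstard (n d : ℕ) (H : ℝ → ℝ → (Fin d → ℝ) → ℝ) : Prop :=
  (∀ (s t : ℝ) (u : Fin d → ℝ), 0 ≤ s → s ≤ t → t ≤ 1 →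
    (∀ j, u j ∈ Icc (0 : ℝ) 1) → H s t u ∈ Icc (0 : ℝ) 1) ∧
  (∀ j : Fin d, memEstar n (marg H j))

/-- `C_n^⋆(s,t,u) = λ_n(s,t) C(u)`. -/
noncomputable def Cstar (n d : ℕ) (C : (Fin d → ℝ) → ℝ) :
    ℝ → ℝ → (Fin d → ℝ) → ℝ :=
  fun s t u => lam n s t * C u

/-- Membership in `D^⋆`. -/
def memDstar (d : ℕ) (α : ℝ → ℝ → (Fin d → ℝ) → ℝ) : Prop :=
  (∃ M : ℝ, ∀ (s t : ℝ) (u : Fin d → ℝ), |α s t u| ≤ M) ∧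
  (∀ (s : ℝ) (u : Fin d → ℝ), α s s u = 0) ∧
  (∀ (s t : ℝ) (u : Fin d → ℝ), 0 ≤ s → s < t → t ≤ 1 →
    ((∃ j, u j = 0) ∨ (∀ j, u j = 1)) → α s t u = 0)

/-- Membership in `D_n^⋆`. -/
noncomputable def memDnstar (n d : ℕ) (C : (Fin d → ℝ) → ℝ)
    (α : ℝ → ℝ → (Fin d → ℝ) → ℝ) : Prop :=
  memDstar d α ∧
    memEstard n d fun s t u => Cstar n d C s t u + (Real.sqrt n)⁻¹ * α s t u

/-- Membership in `D_0^⋆`: continuous elements of `D^⋆`. -/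
def memD0star (d : ℕ) (α : ℝ → ℝ → (Fin d → ℝ) → ℝ) : Prop :=
  memDstar d α ∧
    ContinuousOn (fun p : ℝ × ℝ × (Fin d → ℝ) => α p.1 p.2.1 p.2.2)
      {p : ℝ × ℝ × (Fin d → ℝ) |
        0 ≤ p.1 ∧ p.1 ≤ p.2.1 ∧ p.2.1 ≤ 1 ∧ ∀ j, p.2.2 j ∈ Icc (0 : ℝ) 1}

/-- Uniform distance over `Δ × [0,1]^d`. -/
noncomputable def supDist (d : ℕ) (α β : ℝ → ℝ → (Fin d → ℝ) → ℝ) : ℝ :=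
  sSup {x : ℝ | ∃ (s t : ℝ) (u : Fin d → ℝ),
    0 ≤ s ∧ s ≤ t ∧ t ≤ 1 ∧ (∀ j, u j ∈ Icc (0 : ℝ) 1) ∧
    x = |α s t u - β s t u|}


/-- The generalized inverse `w` of `v ↦ v + a v / L` at `u` satisfies `L (w - u) ≈ -b w`, with the
error of approximating `a` by a continuous `b`. The infimum need not be attained: the inequalities
holding on each side of `w` pass to the limit through `b`. -/
lemma abs_inverse_add_le {L ε u : ℝ} {a b : ℝ → ℝ} (hL : 0 < L) (hu : u ∈ Icc (0 : ℝ) 1)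
    (hb : ContinuousOn b (Icc 0 1)) (hab : ∀ v ∈ Icc (0 : ℝ) 1, |a v - b v| ≤ ε)
    (ha1 : a 1 = 0) (hb0 : b 0 = 0) (w : ℝ)
    (hw : w = sInf {v | v ∈ Icc (0 : ℝ) 1 ∧ L * u ≤ L * v + a v}) :
    w ∈ Icc (0 : ℝ) 1 ∧ |L * (w - u) + b w| ≤ ε := by
  set S := {v | v ∈ Icc (0 : ℝ) 1 ∧ L * u ≤ L * v + a v} with hS
  have h1 : (1 : ℝ) ∈ S := ⟨by simp, by rw [ha1]; nlinarith [hu.2]⟩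
  have hbd : BddBelow S := ⟨0, fun v hv => hv.1.1⟩
  have hcl : w ∈ closure S := hw ▸ csInf_mem_closure ⟨1, h1⟩ hbd
  have hcont : ContinuousOn (fun v => L * (v - u) + b v) (Icc 0 1) := by fun_prop
  have hlow : w ∈ Icc (0 : ℝ) 1 ∩ (fun v => L * (v - u) + b v) ⁻¹' Ici (-ε) := by
    refine closure_minimal ?_ (hcont.preimage_isClosed_of_isClosed isClosed_Icc isClosed_Ici) hcl
    intro v hv
    refine ⟨hv.1, ?_⟩
    have := (abs_le.1 (hab v hv.1)).2
    have h2 := hv.2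
    change -ε ≤ L * (v - u) + b v
    linarith
  have hw01 := hlow.1
  have hlow' : -ε ≤ L * (w - u) + b w := hlow.2
  refine ⟨hw01, abs_le.2 ⟨hlow', ?_⟩⟩
  rcases hw01.1.eq_or_lt with h0 | h0
  · have hε : 0 ≤ ε := (abs_nonneg _).trans (hab u hu)
    rw [← h0, hb0]
    nlinarith [hu.1]
  · have hclw : w ∈ closure (Ico 0 w) := by
      rw [closure_Ico h0.ne]; exact ⟨h0.le, le_rfl⟩
    have hup : w ∈ Icc (0 : ℝ) 1 ∩ (fun v => L * (v - u) + b v) ⁻¹' Iic ε := by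
      refine closure_minimal ?_
        (hcont.preimage_isClosed_of_isClosed isClosed_Icc isClosed_Iic) hclw
      intro v hv
      have hv01 : v ∈ Icc (0 : ℝ) 1 := ⟨hv.1, hv.2.le.trans hw01.2⟩
      refine ⟨hv01, ?_⟩
      have hnot : ¬ L * u ≤ L * v + a v := fun h =>
        absurd (csInf_le hbd (show v ∈ S from ⟨hv01, h⟩)) (not_le.2 (hw ▸ hv.2))
      have := (abs_le.1 (hab v hv01)).1
      change L * (v - u) + b v ≤ ε
      linarith
    exact hup.2

lemma dist_marg_le {d : ℕ} (j : Fin d) (v w : ℝ) :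
    dist (fun i : Fin d => if i = j then v else (1 : ℝ)) (fun i => if i = j then w else 1)
      ≤ |v - w| := by
  refine (dist_pi_le_iff (abs_nonneg _)).2 fun i => ?_
  by_cases hi : i = j
  · simp [hi, Real.dist_eq]
  · simp [hi]

lemma margPoint_mem {d : ℕ} (j : Fin d) {v : ℝ} (hv : v ∈ Icc (0 : ℝ) 1) (i : Fin d) :
    (if i = j then v else 1) ∈ Icc (0 : ℝ) 1 := by
  by_cases hi : i = j
  · simpa [hi] using hv
  · simp [hi]

lemma abs_sub_le_supDist {d : ℕ} {α β : ℝ → ℝ → (Fin d → ℝ) → ℝ}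
    (hα : memDstar d α) (hβ : memDstar d β) {s t : ℝ} {u : Fin d → ℝ}
    (hs : 0 ≤ s) (hst : s ≤ t) (ht : t ≤ 1) (hu : ∀ j, u j ∈ Icc (0 : ℝ) 1) :
    |α s t u - β s t u| ≤ supDist d α β := by
  obtain ⟨A, hA⟩ := hα.1
  obtain ⟨B, hB⟩ := hβ.1
  refine le_csSup ⟨A + B, ?_⟩ ⟨s, t, u, hs, hst, ht, hu, rfl⟩
  rintro _ ⟨s, t, u, -, -, -, -, rfl⟩
  exact (abs_sub _ _).trans (add_le_add (hA s t u) (hB s t u))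

lemma isCompact_domain (d : ℕ) :
    IsCompact {p : ℝ × ℝ × (Fin d → ℝ) |
        0 ≤ p.1 ∧ p.1 ≤ p.2.1 ∧ p.2.1 ≤ 1 ∧ ∀ j, p.2.2 j ∈ Icc (0 : ℝ) 1} := by
  have hK : IsCompact ((Icc (0 : ℝ) 1) ×ˢ (Icc (0 : ℝ) 1) ×ˢ
      (Set.pi univ fun _ : Fin d => Icc (0 : ℝ) 1)) :=
    isCompact_Icc.prod (isCompact_Icc.prod (isCompact_univ_pi fun _ => isCompact_Icc))
  convert hK.inter_right (isClosed_le continuous_fst (continuous_fst.comp continuous_snd)) using 1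
  ext ⟨s, t, u⟩
  simp only [mem_inter_iff, mem_prod, Set.mem_pi, mem_univ, mem_ofPred_eq, mem_Icc, true_implies,
    Function.comp]
  constructor
  · rintro ⟨h1, h2, h3, h4⟩
    exact ⟨⟨⟨h1, h2.trans h3⟩, ⟨h1.trans h2, h3⟩, h4⟩, h2⟩
  · rintro ⟨⟨⟨h1, _⟩, ⟨_, h4⟩, h5⟩, h6⟩
    exact ⟨h1, h6, h4, h5⟩

/-- Two consequences of uniform continuity of the limit: equicontinuity in `u`, and
uniform smallness near the diagonal `s = t`. -/
lemma exists_modulus {d : ℕ} {β : ℝ → ℝ → (Fin d → ℝ) → ℝ} (hβ : memD0star d β) (j : Fin d)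
    {ε : ℝ} (hε : 0 < ε) :
    ∃ δ > 0, ∀ s t : ℝ, 0 ≤ s → s ≤ t → t ≤ 1 → ∀ v ∈ Icc (0 : ℝ) 1,
      (∀ w ∈ Icc (0 : ℝ) 1, |v - w| < δ → |marg β j s t v - marg β j s t w| < ε) ∧
      (t - s < δ → |marg β j s t v| < ε) := by
  have huc := (isCompact_domain d).uniformContinuousOn_of_continuous hβ.2
  obtain ⟨δ, hδ, h⟩ := Metric.uniformContinuousOn_iff.1 huc ε hε
  refine ⟨δ, hδ, fun s t hs hst ht v hv => ⟨fun w hw hvw => ?_, fun hts => ?_⟩⟩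
  · have := h (s, t, fun i => if i = j then v else 1)
      ⟨hs, hst, ht, margPoint_mem j hv⟩ (s, t, fun i => if i = j then w else 1)
      ⟨hs, hst, ht, margPoint_mem j hw⟩
      (by simpa [Prod.dist_eq, hδ] using (dist_marg_le j v w).trans_lt hvw)
    simpa [Real.dist_eq, marg] using this
  · have := h (s, t, fun i => if i = j then v else 1)
      ⟨hs, hst, ht, margPoint_mem j hv⟩ (s, s, fun i => if i = j then v else 1)
      ⟨hs, le_rfl, hst.trans ht, margPoint_mem j hv⟩
      (by
        have : |t - s| < δ := by rwa [abs_of_nonneg (sub_nonneg.2 hst)]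
        simpa [Prod.dist_eq, hδ, Real.dist_eq] using this)
    simpa [Real.dist_eq, marg, hβ.1.2.1] using this

/-- If `α_n^⋆ ∈ D_n^⋆` converges uniformly on `Δ × [0,1]^d` to
`α^⋆ ∈ D_0^⋆`, then for every coordinate `j`,
`sup_{(s,t,u) ∈ Δ×[0,1]} |√n λ_n(s,t) { I_n(U_n^⋆ + n^{−1/2} α_{n,j}^⋆)(s,t,u) − u }
  + α_j^⋆(s,t,u)| → 0`. -/
theorem inverse_process_uniform_convergence
    (d : ℕ) (hd : 1 ≤ d)
    (μ : MeasureTheory.Measure (Fin d → ℝ)) [MeasureTheory.IsProbabilityMeasure μ]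
    (hμsupp : μ {x | ¬ ∀ j, x j ∈ Icc (0 : ℝ) 1} = 0)
    (hμmarg : ∀ j : Fin d, ∀ x ∈ Icc (0 : ℝ) 1, (μ {y | y j ≤ x}).toReal = x)
    (C : (Fin d → ℝ) → ℝ)
    (hC : ∀ u : Fin d → ℝ, (∀ j, u j ∈ Icc (0 : ℝ) 1) →
      C u = (μ {x | ∀ j, x j ≤ u j}).toReal)
    (α : ℕ → ℝ → ℝ → (Fin d → ℝ) → ℝ) (αlim : ℝ → ℝ → (Fin d → ℝ) → ℝ)
    (hα : ∀ n : ℕ, 1 ≤ n → memDnstar n d C (α n))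
    (hαlim : memD0star d αlim)
    (hconv : Tendsto (fun n => supDist d (α n) αlim) atTop (nhds 0)) :
    ∀ j : Fin d,
      Tendsto
        (fun n : ℕ => sSup {x : ℝ | ∃ (s t u : ℝ),
          0 ≤ s ∧ s ≤ t ∧ t ≤ 1 ∧ u ∈ Icc (0 : ℝ) 1 ∧
          x = |Real.sqrt n * lam n s t *
              (In n (fun s' t' v => lam n s' t' * v +
                  (Real.sqrt n)⁻¹ * marg (α n) j s' t' v) s t u - u)
            + marg αlim j s t u|})
        atTop (nhds 0) := by
  intro j
  rw [Metric.tendsto_atTop] at hconv ⊢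
  intro ε₀ hε₀
  obtain ⟨ε, hε, hε1, hεε⟩ : ∃ ε : ℝ, 0 < ε ∧ ε ≤ 1 ∧ 3 * ε < ε₀ :=
    ⟨min 1 (ε₀ / 4), by positivity, min_le_left _ _, by
      have := min_le_right 1 (ε₀ / 4); linarith⟩
  obtain ⟨δ, hδ, hmod⟩ := exists_modulus hαlim j hε
  obtain ⟨M, hM⟩ := hαlim.1.1
  have hM0 : 0 ≤ M := (abs_nonneg _).trans (hM 0 0 0)
  -- Threshold for `√n λ` separating the large and the bounded regimes.
  obtain ⟨K, hKM⟩ : ∃ K : ℝ, M + 1 < K * δ :=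
    ⟨(M + 2) / δ, by rw [div_mul_cancel₀ _ hδ.ne']; linarith⟩
  obtain ⟨N₁, hN₁⟩ := hconv ε hε
  obtain ⟨N₂, hN₂⟩ := exists_nat_gt (((K + 1) / δ) ^ 2)
  refine ⟨max 1 (max N₁ N₂), fun n hn => ?_⟩
  have hn1 : 1 ≤ n := (le_max_left _ _).trans hn
  have hnN₁ : N₁ ≤ n := ((le_max_left _ _).trans (le_max_right _ _)).trans hn
  have hnN₂ : N₂ ≤ n := ((le_max_right _ _).trans (le_max_right _ _)).trans hn
  have hn1' : (1 : ℝ) ≤ n := by exact_mod_cast hn1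
  have hn0 : (0 : ℝ) < n := by linarith
  set r := Real.sqrt n with hr
  have hr1 : 1 ≤ r := Real.one_le_sqrt.2 hn1'
  have hr0 : 0 < r := by linarith
  have hrr : r * r = n := Real.mul_self_sqrt hn0.le
  have hrδ : K + 1 < r * δ := by
    have h1 : ((K + 1) / δ) ^ 2 < n := hN₂.trans_le (by exact_mod_cast hnN₂)
    exact (div_lt_iff₀ hδ).1 (Real.lt_sqrt_of_sq_lt h1)
  have hdist : supDist d (α n) αlim < ε := by
    have := hN₁ n hnN₁
    rw [Real.dist_eq, sub_zero] at this
    exact (le_abs_self _).trans_lt this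
  have hD := hα n hn1
  rw [Real.dist_eq, sub_zero, abs_of_nonneg]
  swap
  · apply Real.sSup_nonneg
    rintro _ ⟨s, t, u, -, -, -, -, rfl⟩
    exact abs_nonneg _
  refine lt_of_le_of_lt (Real.sSup_le ?_ (by positivity)) hεε
  rintro _ ⟨s, t, u, hs, hst, ht, hu, rfl⟩
  have hab : ∀ v ∈ Icc (0 : ℝ) 1, |marg (α n) j s t v - marg αlim j s t v| ≤ ε := fun v hv =>
    (abs_sub_le_supDist hD.1 hαlim.1 hs hst ht (margPoint_mem j hv)).trans hdist.le
  have hfl : ⌊(n : ℝ) * s⌋ ≤ ⌊(n : ℝ) * t⌋ := Int.floor_le_floor (by gcongr)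
  rcases hfl.eq_or_lt with heq | hlt
  · have hl : lam n s t = 0 := by simp [lam, heq]
    have h0 := ((hD.2.2 j).2 s t hs hst ht).2 heq u
    have ha : marg (α n) j s t u = 0 := by
      simpa [marg, Cstar, hl, hr0.ne', ← hr] using h0
    have := hab u hu
    rw [ha, zero_sub, abs_neg] at this
    rw [hl]
    simp only [mul_zero, zero_mul, zero_add]
    linarith
  · have hlt' : s < t := by
      refine hst.lt_of_ne ?_
      rintro rfl
      exact lt_irrefl _ hlt
    have hnl : (n : ℝ) * lam n s t = (⌊(n : ℝ) * t⌋ : ℝ) - ⌊(n : ℝ) * s⌋ := by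
      rw [lam]; field_simp
    have hl : 0 < lam n s t := by
      have : (0 : ℝ) < (⌊(n : ℝ) * t⌋ : ℝ) - ⌊(n : ℝ) * s⌋ := by
        rw [sub_pos]; exact_mod_cast hlt
      exact div_pos this hn0
    have hb : ContinuousOn (marg αlim j s t) (Icc 0 1) := by
      have : ContinuousOn (fun v : ℝ => (s, t, fun i : Fin d => if i = j then v else (1 : ℝ)))
          (Icc 0 1) := by
        refine Continuous.continuousOn ?_
        refine continuous_const.prodMk (continuous_const.prodMk (continuous_pi fun i => ?_))
        by_cases hi : i = j
        · simpa [hi] using continuous_id'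
        · simpa [hi] using continuous_const
      exact hαlim.2.comp this fun v hv => ⟨hs, hst, ht, margPoint_mem j hv⟩
    have ha1 : marg (α n) j s t 1 = 0 := hD.1.2.2 s t _ hs hlt' ht (Or.inr fun i => by simp)
    have hb0 : marg αlim j s t 0 = 0 :=
      hαlim.1.2.2 s t _ hs hlt' ht (Or.inl ⟨j, by simp⟩)
    set L := r * lam n s t with hL
    set w := In n (fun s' t' v => lam n s' t' * v + r⁻¹ * marg (α n) j s' t' v) s t u with hw
    have hweq : w = sInf {v | v ∈ Icc (0 : ℝ) 1 ∧ L * u ≤ L * v + marg (α n) j s t v} := by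
      rw [hw, In]
      congr 1
      ext v
      refine and_congr_right fun _ => ?_
      rw [← mul_le_mul_iff_right₀ hr0]
      have : r * (lam n s t * v + r⁻¹ * marg (α n) j s t v)
          = L * v + marg (α n) j s t v := by
        rw [hL]; field_simp
      rw [this, ← mul_assoc]
    obtain ⟨hw01, hmain⟩ := abs_inverse_add_le (mul_pos hr0 hl) hu hb hab ha1 hb0 w hweq
    have hbwu : |marg αlim j s t u - marg αlim j s t w| ≤ 2 * ε := by
      by_cases hcase : |u - w| < δ
      · linarith [(hmod s t hs hst ht u hu).1 w hw01 hcase]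
      · -- Here `√n λ |w - u| ≤ M + 1` forces `√n λ < K`, hence `t - s < δ`.
        have hLw : L * |u - w| ≤ M + 1 := by
          have h1 : |L * (w - u)| ≤ ε + M := by
            have h2 := abs_sub (L * (w - u) + marg αlim j s t w) (marg αlim j s t w)
            rw [add_sub_cancel_right] at h2
            exact h2.trans (add_le_add hmain (hM _ _ _))
          rw [abs_mul, abs_of_pos (mul_pos hr0 hl), abs_sub_comm] at h1
          linarith
        have hLK : L < K := by
          by_contra hKL
          have hLpos : 0 < L := mul_pos hr0 hl
          push Not at hKL hcase
          nlinarith [mul_le_mul_of_nonneg_left hcase hLpos.le, mul_le_mul_of_nonneg_right hKL hδ.le]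
        have hts : t - s < δ := by
          have h1 := Int.lt_floor_add_one ((n : ℝ) * t)
          have h2 := Int.floor_le ((n : ℝ) * s)
          have h3 : r * (r * (t - s)) ≤ r * (L + 1) := by
            have : r * (r * (t - s)) = n * t - n * s := by rw [← hrr]; ring
            have h4 : r * L = n * lam n s t := by rw [hL, ← hrr]; ring
            rw [this, mul_add, h4, hnl]
            linarith
          have h5 := le_of_mul_le_mul_left h3 hr0
          have h6 : r * (t - s) < r * δ := by linarith
          exact lt_of_mul_lt_mul_left h6 hr0.le
        have h1 := (hmod s t hs hst ht u hu).2 hts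
        have h2 := (hmod s t hs hst ht w hw01).2 hts
        linarith [abs_sub (marg αlim j s t u) (marg αlim j s t w)]
    calc |L * (w - u) + marg αlim j s t u|
        = |(L * (w - u) + marg αlim j s t w)
            + (marg αlim j s t u - marg αlim j s t w)| := by congr 1; ring
      _ ≤ ε + 2 * ε := (abs_add_le _ _).trans (add_le_add hmain hbwu)
      _ = 3 * ε := by ring

end Stmt6
end

section
/- Let C be a d-dimensional copula. If α_n^⋆ ∈ D_n^⋆ for every n and α^⋆ ∈ D_0^⋆ are such that sup_{Δ×[0,1]^d} |α_n^⋆ − α^⋆| → 0, then for every j ∈ {1,…,d}, setting ξ_{n,j}(s,t,u) = I_n(U_n^⋆ + n^{−1/2} α_{n,j}^⋆)(s,t,u), one has sup{ |λ_n(s,t) (ξ_{n,j}(s,t,u) − u)| : (s,t) ∈ Δ with ⌊ns⌋ < ⌊nt⌋, u ∈ (0,1] } → 0 as n → ∞. -/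
/-!
The argument is deterministic. Since the `α n` converge uniformly to a bounded limit, they are
eventually bounded by one constant `K` on `Δ × [0,1]^d`, so the function being inverted differs from
`v ↦ λ_n v` by at most `K / √n`; moreover the two agree at `v = 1`. The generalized inverse at level
`λ_n u` is then within `K / (√n λ_n)` of `u` (`abs_mul_sInf_sub_le`), and multiplying by `λ_n` gives
the bound `K / √n`, uniform in `(s, t, u)`.
-/

open Set Filter

namespace Stmt7

/-- `λ_n(s,t) = (⌊nt⌋ − ⌊ns⌋)/n`. -/
noncomputable def lam (n : ℕ) (s t : ℝ) : ℝ :=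
  ((⌊(n : ℝ) * t⌋ : ℝ) - (⌊(n : ℝ) * s⌋ : ℝ)) / (n : ℝ)

/-- Membership in `E`: right-continuous nondecreasing maps `[0,1] → [0,1]`
with `G 0 = 0` and `G 1 = 1`. -/
def memE (G : ℝ → ℝ) : Prop :=
  (∀ x ∈ Icc (0 : ℝ) 1, G x ∈ Icc (0 : ℝ) 1) ∧
  MonotoneOn G (Icc (0 : ℝ) 1) ∧
  (∀ x ∈ Ico (0 : ℝ) 1, ContinuousWithinAt G (Icc x 1) x) ∧
  G 0 = 0 ∧ G 1 = 1

/-- Membership in `E_n^⋆`. -/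
def memEstar (n : ℕ) (F : ℝ → ℝ → ℝ → ℝ) : Prop :=
  (∀ s t u : ℝ, 0 ≤ s → s ≤ t → t ≤ 1 → u ∈ Icc (0 : ℝ) 1 →
    F s t u ∈ Icc (0 : ℝ) 1) ∧
  (∀ s t : ℝ, 0 ≤ s → s ≤ t → t ≤ 1 →
    ((⌊(n : ℝ) * s⌋ < ⌊(n : ℝ) * t⌋ → memE fun u => (lam n s t)⁻¹ * F s t u) ∧
     (⌊(n : ℝ) * s⌋ = ⌊(n : ℝ) * t⌋ → ∀ u : ℝ, F s t u = 0)))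

/-- `I_n(F^⋆)(s,t,u) = inf {v ∈ [0,1] : F^⋆(s,t,v) ≥ λ_n(s,t)·u}`. -/
noncomputable def In (n : ℕ) (F : ℝ → ℝ → ℝ → ℝ) (s t u : ℝ) : ℝ :=
  sInf {v : ℝ | v ∈ Icc (0 : ℝ) 1 ∧ lam n s t * u ≤ F s t v}

/-- The `j`-th marginal `H_j^⋆` of `H^⋆ : Δ × [0,1]^d → ℝ`. -/
def marg {d : ℕ} (H : ℝ → ℝ → (Fin d → ℝ) → ℝ) (j : Fin d) :
    ℝ → ℝ → ℝ → ℝ :=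
  fun s t u => H s t fun i => if i = j then u else 1

/-- Membership in `E_{n,d}^⋆`. -/
def memEstard (n d : ℕ) (H : ℝ → ℝ → (Fin d → ℝ) → ℝ) : Prop :=
  (∀ (s t : ℝ) (u : Fin d → ℝ), 0 ≤ s → s ≤ t → t ≤ 1 →
    (∀ j, u j ∈ Icc (0 : ℝ) 1) → H s t u ∈ Icc (0 : ℝ) 1) ∧
  (∀ j : Fin d, memEstar n (marg H j))

/-- `C_n^⋆(s,t,u) = λ_n(s,t) C(u)`. -/
noncomputable def Cstar (n d : ℕ) (C : (Fin d → ℝ) → ℝ) :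
    ℝ → ℝ → (Fin d → ℝ) → ℝ :=
  fun s t u => lam n s t * C u

/-- Membership in `D^⋆`. -/
def memDstar (d : ℕ) (α : ℝ → ℝ → (Fin d → ℝ) → ℝ) : Prop :=
  (∃ M : ℝ, ∀ (s t : ℝ) (u : Fin d → ℝ), |α s t u| ≤ M) ∧
  (∀ (s : ℝ) (u : Fin d → ℝ), α s s u = 0) ∧
  (∀ (s t : ℝ) (u : Fin d → ℝ), 0 ≤ s → s < t → t ≤ 1 →
    ((∃ j, u j = 0) ∨ (∀ j, u j = 1)) → α s t u = 0)

/-- Membership in `D_n^⋆`. -/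
noncomputable def memDnstar (n d : ℕ) (C : (Fin d → ℝ) → ℝ)
    (α : ℝ → ℝ → (Fin d → ℝ) → ℝ) : Prop :=
  memDstar d α ∧
    memEstard n d fun s t u => Cstar n d C s t u + (Real.sqrt n)⁻¹ * α s t u

/-- Membership in `D_0^⋆`: continuous elements of `D^⋆`. -/
def memD0star (d : ℕ) (α : ℝ → ℝ → (Fin d → ℝ) → ℝ) : Prop :=
  memDstar d α ∧
    ContinuousOn (fun p : ℝ × ℝ × (Fin d → ℝ) => α p.1 p.2.1 p.2.2)
      {p : ℝ × ℝ × (Fin d → ℝ) |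
        0 ≤ p.1 ∧ p.1 ≤ p.2.1 ∧ p.2.1 ≤ 1 ∧ ∀ j, p.2.2 j ∈ Icc (0 : ℝ) 1}

/-- Uniform distance over `Δ × [0,1]^d`. -/
noncomputable def supDist (d : ℕ) (α β : ℝ → ℝ → (Fin d → ℝ) → ℝ) : ℝ :=
  sSup {x : ℝ | ∃ (s t : ℝ) (u : Fin d → ℝ),
    0 ≤ s ∧ s ≤ t ∧ t ≤ 1 ∧ (∀ j, u j ∈ Icc (0 : ℝ) 1) ∧
    x = |α s t u - β s t u|}

/-- A deterministic bound behind the convergence: if a map `g` on `[0,1]` vanishes at `1` and is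
bounded by `ε` in absolute value, then the generalized inverse of `v ↦ l * v + g v` at level `l * u`
is within `ε / l` of `u`. -/
lemma abs_mul_sInf_sub_le {l u ε : ℝ} (hl : 0 < l) (hu : u ∈ Ioc (0 : ℝ) 1) (g : ℝ → ℝ)
    (hg : ∀ v ∈ Icc (0 : ℝ) 1, |g v| ≤ ε) (hg1 : g 1 = 0) :
    |l * (sInf {v : ℝ | v ∈ Icc (0 : ℝ) 1 ∧ l * u ≤ l * v + g v} - u)| ≤ ε := by
  set S := {v : ℝ | v ∈ Icc (0 : ℝ) 1 ∧ l * u ≤ l * v + g v} with hS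
  have hε : 0 ≤ ε := (abs_nonneg _).trans (hg 1 (by simp))
  have h1 : (1 : ℝ) ∈ S := by
    refine ⟨by simp, ?_⟩
    rw [hg1]
    nlinarith [hu.2]
  have hbdd : BddBelow S := ⟨0, fun v hv => hv.1.1⟩
  have hlow : u - ε / l ≤ sInf S := by
    refine le_csInf ⟨1, h1⟩ fun v hv => ?_
    have h := (abs_le.1 (hg v hv.1)).2
    have h2 := hv.2
    rw [sub_le_iff_le_add, ← sub_le_iff_le_add', le_div_iff₀ hl]
    linarith
  have hup : sInf S ≤ u + ε / l := by
    rcases le_or_gt (u + ε / l) 1 with h | h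
    · have hm : u + ε / l ∈ Icc (0 : ℝ) 1 := ⟨by have := hu.1; positivity, h⟩
      refine csInf_le hbdd ⟨hm, ?_⟩
      have h' := (abs_le.1 (hg _ hm)).1
      rw [mul_add, mul_div_cancel₀ ε hl.ne']
      linarith
    · exact (csInf_le hbdd h1).trans h.le
  have e : l * (ε / l) = ε := mul_div_cancel₀ ε hl.ne'
  rw [abs_le]
  constructor <;> nlinarith

/-- Uniform closeness to a bounded limit turns into a bound on `Δ × [0,1]^d`. The boundedness of
both functions makes the supremum defining `supDist` a genuine one. -/
lemma abs_le_of_supDist_le {d : ℕ} {α β : ℝ → ℝ → (Fin d → ℝ) → ℝ} (hα : memDstar d α) {M : ℝ}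
    (hβ : ∀ (s t : ℝ) (u : Fin d → ℝ), |β s t u| ≤ M) (h : supDist d α β ≤ 1)
    {s t : ℝ} {u : Fin d → ℝ} (hs : 0 ≤ s) (hst : s ≤ t) (ht : t ≤ 1)
    (hu : ∀ j, u j ∈ Icc (0 : ℝ) 1) : |α s t u| ≤ M + 1 := by
  obtain ⟨K, hK⟩ := hα.1
  have hle : |α s t u - β s t u| ≤ supDist d α β := by
    refine le_csSup ⟨K + M, ?_⟩ ⟨s, t, u, hs, hst, ht, hu, rfl⟩
    rintro _ ⟨s, t, u, -, -, -, -, rfl⟩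
    exact (abs_sub _ _).trans (add_le_add (hK s t u) (hβ s t u))
  have h3 : |α s t u| ≤ |α s t u - β s t u| + |β s t u| := by
    simpa using abs_add_le (α s t u - β s t u) (β s t u)
  linarith [hβ s t u]

/-- If `α_n^⋆ ∈ D_n^⋆` converges uniformly on `Δ × [0,1]^d` to
`α^⋆ ∈ D_0^⋆`, then `sup |λ_n(s,t)(ξ_{n,j}(s,t,u) − u)| → 0`, the supremum being
over `(s,t) ∈ Δ` with `⌊ns⌋ < ⌊nt⌋` and `u ∈ (0,1]`, where
`ξ_{n,j} = I_n(U_n^⋆ + n^{−1/2} α_{n,j}^⋆)`. -/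
theorem inverse_process_uniform_convergence_unnormalized
    (d : ℕ) (hd : 1 ≤ d)
    (μ : MeasureTheory.Measure (Fin d → ℝ)) [MeasureTheory.IsProbabilityMeasure μ]
    (hμsupp : μ {x | ¬ ∀ j, x j ∈ Icc (0 : ℝ) 1} = 0)
    (hμmarg : ∀ j : Fin d, ∀ x ∈ Icc (0 : ℝ) 1, (μ {y | y j ≤ x}).toReal = x)
    (C : (Fin d → ℝ) → ℝ)
    (hC : ∀ u : Fin d → ℝ, (∀ j, u j ∈ Icc (0 : ℝ) 1) →
      C u = (μ {x | ∀ j, x j ≤ u j}).toReal)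
    (α : ℕ → ℝ → ℝ → (Fin d → ℝ) → ℝ) (αlim : ℝ → ℝ → (Fin d → ℝ) → ℝ)
    (hα : ∀ n : ℕ, 1 ≤ n → memDnstar n d C (α n))
    (hαlim : memD0star d αlim)
    (hconv : Tendsto (fun n => supDist d (α n) αlim) atTop (nhds 0)) :
    ∀ j : Fin d,
      Tendsto
        (fun n : ℕ => sSup {x : ℝ | ∃ (s t u : ℝ),
          0 ≤ s ∧ s ≤ t ∧ t ≤ 1 ∧ ⌊(n : ℝ) * s⌋ < ⌊(n : ℝ) * t⌋ ∧
          u ∈ Ioc (0 : ℝ) 1 ∧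
          x = |lam n s t *
            (In n (fun s' t' v => lam n s' t' * v +
                (Real.sqrt n)⁻¹ * marg (α n) j s' t' v) s t u - u)|})
        atTop (nhds 0) := by
  intro j
  obtain ⟨M, hM⟩ := hαlim.1.1
  have hlim : Tendsto (fun n : ℕ => (Real.sqrt n)⁻¹ * (M + 1)) atTop (nhds 0) := by
    have h : Tendsto (fun n : ℕ => (Real.sqrt n)⁻¹) atTop (nhds 0) :=
      tendsto_inv_atTop_zero.comp (Real.tendsto_sqrt_atTop.comp tendsto_natCast_atTop_atTop)
    simpa using h.mul_const (M + 1)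
  refine tendsto_of_tendsto_of_tendsto_of_le_of_le' tendsto_const_nhds hlim ?_ ?_
  · refine Eventually.of_forall fun n => Real.sSup_nonneg ?_
    rintro _ ⟨s, t, u, -, -, -, -, -, rfl⟩
    exact abs_nonneg _
  filter_upwards [hconv.eventually (ge_mem_nhds zero_lt_one), eventually_ge_atTop 1] with n hn hn1
  have hM0 : 0 ≤ M := (abs_nonneg _).trans (hM 0 0 0)
  have hD := (hα n hn1).1
  refine Real.sSup_le ?_ (by positivity)
  rintro _ ⟨s, t, u, hs, hst, ht, hfl, hu, rfl⟩
  have hn0 : (0 : ℝ) < n := by exact_mod_cast hn1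
  have hl : 0 < lam n s t :=
    div_pos (sub_pos.2 (by exact_mod_cast hfl)) hn0
  have hlt : s < t := by
    refine lt_of_le_of_ne hst ?_
    rintro rfl
    exact lt_irrefl _ hfl
  refine abs_mul_sInf_sub_le hl hu (fun v => (Real.sqrt n)⁻¹ * marg (α n) j s t v) ?_ ?_
  · intro v hv
    rw [abs_mul, abs_of_nonneg (by positivity : (0 : ℝ) ≤ (Real.sqrt n)⁻¹)]
    refine mul_le_mul_of_nonneg_left ?_ (by positivity)
    refine abs_le_of_supDist_le hD hM hn hs hst ht fun i => ?_
    split_ifs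
    · exact hv
    · simp
  · have h0 : marg (α n) j s t 1 = 0 :=
      hD.2.2 s t _ hs hlt ht (Or.inr fun i => by simp)
    simp [h0]

end Stmt7
end

section
/- Let m ≥ 1 and let V_1,…,V_m ∈ [0,1]^d be points such that, for each coordinate j ∈ {1,…,d}, the values V_{1j},…,V_{mj} are pairwise distinct. Define the ranks R_{ij} = #{k ∈ {1,…,m} : V_{kj} ≤ V_{ij}}, the empirical copula C_m(u) = m^{−1} Σ_{i=1}^m 1(R_{i1}/m ≤ u_1, …, R_{id}/m ≤ u_d), the empirical c.d.f. H_m(x) = m^{−1} Σ_{i=1}^m 1(V_i ≤ x), its j-th marginal H_{m,j}(x) = m^{−1} Σ_{i=1}^m 1(V_{ij} ≤ x), and H_{m,j}^{−1}(u) = inf{x ∈ [0,1] : H_{m,j}(x) ≥ u}. Then sup_{u∈[0,1]^d} | C_m(u) − H_m( H_{m,1}^{−1}(u_1), …, H_{m,d}^{−1}(u_d) ) | ≤ d/m. -/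
/-!
Fix a coordinate `j` and write `q` for the generalized inverse at `u j`.

* If `rank i j / m ≤ u j`, then `V i j ≤ q`: the marginal c.d.f. is strictly smaller below `V i j`
  than at `V i j`, so every point of the set defining `q` is at least `V i j`.
* At most one index `i` has `V i j ≤ q` but `rank i j / m > u j`: for such an `i` the point `V i j`
  belongs to the set defining `q`, so `V i j = q`, and there are no ties.

Hence the indices counted by the empirical copula are among those counted by the composed empirical
c.d.f., and the excess is covered by `d` sets of cardinality at most one.
-/

open Set

namespace Stmt9

variable (d m : ℕ) (V : ℕ → Fin d → ℝ)

/-- Rank of `V i j` among `V 1 j, …, V m j`. -/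
noncomputable def rank (i : ℕ) (j : Fin d) : ℕ :=
  ((Finset.Icc 1 m).filter fun k => V k j ≤ V i j).card

/-- Empirical copula of `V 1, …, V m`. -/
noncomputable def empCop (u : Fin d → ℝ) : ℝ :=
  (m : ℝ)⁻¹ * ∑ i ∈ Finset.Icc 1 m,
    (if ∀ j, (rank d m V i j : ℝ) / (m : ℝ) ≤ u j then (1 : ℝ) else 0)

/-- Empirical c.d.f. of `V 1, …, V m`. -/
noncomputable def empCdf (x : Fin d → ℝ) : ℝ :=
  (m : ℝ)⁻¹ * ∑ i ∈ Finset.Icc 1 m, (if ∀ j, V i j ≤ x j then (1 : ℝ) else 0)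

/-- `j`-th marginal empirical c.d.f. -/
noncomputable def empCdfMarg (j : Fin d) (x : ℝ) : ℝ :=
  (m : ℝ)⁻¹ * ∑ i ∈ Finset.Icc 1 m, (if V i j ≤ x then (1 : ℝ) else 0)

/-- Generalized inverse of the `j`-th marginal empirical c.d.f. -/
noncomputable def empCdfMargInv (j : Fin d) (u : ℝ) : ℝ :=
  sInf {x | x ∈ Icc (0 : ℝ) 1 ∧ u ≤ empCdfMarg d m V j x}

theorem empCdfMarg_eq_card (j : Fin d) (x : ℝ) :
    empCdfMarg d m V j x =
      (((Finset.Icc 1 m).filter fun k => V k j ≤ x).card : ℝ) / (m : ℝ) := by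
  rw [empCdfMarg, Finset.sum_boole, div_eq_inv_mul]

theorem empCdfMarg_apply_self (i : ℕ) (j : Fin d) :
    empCdfMarg d m V j (V i j) = (rank d m V i j : ℝ) / (m : ℝ) := by
  rw [empCdfMarg_eq_card, rank]

/-- The marginal empirical c.d.f. has a jump at each of the sample values. -/
theorem empCdfMarg_lt_of_lt {i : ℕ} (hi : i ∈ Finset.Icc 1 m) (j : Fin d) {x : ℝ}
    (hx : x < V i j) : empCdfMarg d m V j x < (rank d m V i j : ℝ) / (m : ℝ) := by
  have hi' := Finset.mem_Icc.1 hi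
  have hm : (0 : ℝ) < m := by exact_mod_cast (by omega : 0 < m)
  rw [empCdfMarg_eq_card, rank]
  refine div_lt_div_of_pos_right ?_ hm
  norm_cast
  refine Finset.card_lt_card (Finset.ssubset_iff_of_subset ?_ |>.2 ⟨i, ?_, ?_⟩)
  · intro k hk
    rw [Finset.mem_filter] at hk ⊢
    exact ⟨hk.1, hk.2.trans hx.le⟩
  · simpa using hi'
  · simp [hx]

theorem le_empCdfMargInv (hm : 1 ≤ m) (j : Fin d)
    (hVrange : ∀ i, 1 ≤ i → i ≤ m → ∀ j, V i j ∈ Icc (0 : ℝ) 1)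
    {i : ℕ} (hi : i ∈ Finset.Icc 1 m) {t : ℝ} (ht : t ≤ 1)
    (h : (rank d m V i j : ℝ) / (m : ℝ) ≤ t) : V i j ≤ empCdfMargInv d m V j t := by
  refine le_csInf ⟨1, by simp, ?_⟩ ?_
  -- The set is nonempty because the marginal c.d.f. equals `1` at `1`.
  · rw [empCdfMarg_eq_card, Finset.filter_true_of_mem]
    · have : (m : ℝ) ≠ 0 := by exact_mod_cast (by omega : m ≠ 0)
      simpa [this] using ht
    · intro k hk
      rw [Finset.mem_Icc] at hk
      exact (hVrange k hk.1 hk.2 j).2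
  · rintro x ⟨-, hx⟩
    by_contra hlt
    exact absurd (empCdfMarg_lt_of_lt d m V hi j (not_le.1 hlt)) (not_lt.2 (h.trans hx))

theorem empCdfMargInv_le (j : Fin d) {i : ℕ} (hV : V i j ∈ Icc (0 : ℝ) 1) {t : ℝ}
    (h : t ≤ (rank d m V i j : ℝ) / (m : ℝ)) : empCdfMargInv d m V j t ≤ V i j :=
  csInf_le ⟨0, fun _ hx => hx.1.1⟩ ⟨hV, by rwa [empCdfMarg_apply_self]⟩

/-- If, for each coordinate `j`, the values `V 1 j, …, V m j` are
pairwise distinct, then the empirical copula is uniformly within `d/m` of the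
empirical c.d.f. composed with the generalized inverses of its margins. -/
theorem empCop_close_to_empCdf_comp_inverses (hm : 1 ≤ m)
    (hVrange : ∀ i, 1 ≤ i → i ≤ m → ∀ j, V i j ∈ Icc (0 : ℝ) 1)
    (hdist : ∀ j : Fin d, ∀ i k, 1 ≤ i → i ≤ m → 1 ≤ k → k ≤ m → i ≠ k →
      V i j ≠ V k j)
    (u : Fin d → ℝ) (hu : ∀ j, u j ∈ Icc (0 : ℝ) 1) :
    |empCop d m V u - empCdf d m V (fun j => empCdfMargInv d m V j (u j))|
      ≤ (d : ℝ) / (m : ℝ) := by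
  classical
  have hm0 : (0 : ℝ) < m := by exact_mod_cast hm
  rw [empCop, empCdf, Finset.sum_boole, Finset.sum_boole]
  set q : Fin d → ℝ := fun j => empCdfMargInv d m V j (u j) with hq
  set A := (Finset.Icc 1 m).filter fun i => ∀ j, (rank d m V i j : ℝ) / (m : ℝ) ≤ u j with hA
  set B := (Finset.Icc 1 m).filter fun i => ∀ j, V i j ≤ q j with hB
  -- The indices on which the two indicators disagree in coordinate `j`.
  let D : Fin d → Finset ℕ := fun j =>
    (Finset.Icc 1 m).filter fun i => V i j ≤ q j ∧ u j < (rank d m V i j : ℝ) / (m : ℝ)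
  have hAB : A ⊆ B := by
    intro i hi
    rw [hA, Finset.mem_filter] at hi
    rw [hB, Finset.mem_filter]
    exact ⟨hi.1, fun j => le_empCdfMargInv d m V hm j hVrange hi.1 (hu j).2 (hi.2 j)⟩
  have hD : ∀ j, (D j).card ≤ 1 := by
    intro j
    have key : ∀ i ∈ D j, V i j = q j := by
      intro i hi
      obtain ⟨hi, h1, h2⟩ := Finset.mem_filter.1 hi
      rw [Finset.mem_Icc] at hi
      exact le_antisymm h1 (empCdfMargInv_le d m V j (hVrange i hi.1 hi.2 j) h2.le)
    refine Finset.card_le_one.2 fun i hi k hk => ?_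
    by_contra hne
    have hi' := Finset.mem_Icc.1 (Finset.mem_filter.1 hi).1
    have hk' := Finset.mem_Icc.1 (Finset.mem_filter.1 hk).1
    exact hdist j i k hi'.1 hi'.2 hk'.1 hk'.2 hne ((key i hi).trans (key k hk).symm)
  have hBA : B ⊆ A ∪ Finset.univ.biUnion D := by
    intro i hi
    obtain ⟨hi, hV⟩ := Finset.mem_filter.1 hi
    by_cases h : ∀ j, (rank d m V i j : ℝ) / (m : ℝ) ≤ u j
    · exact Finset.mem_union_left _ (Finset.mem_filter.2 ⟨hi, h⟩)
    · push Not at h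
      obtain ⟨j, hj⟩ := h
      exact Finset.mem_union_right _ (Finset.mem_biUnion.2
        ⟨j, Finset.mem_univ _, Finset.mem_filter.2 ⟨hi, hV j, hj⟩⟩)
  have h1 : (A.card : ℝ) ≤ B.card := by exact_mod_cast Finset.card_le_card hAB
  have h2 : (B.card : ℝ) ≤ A.card + d := by
    have hU : (Finset.univ.biUnion D).card ≤ d := by
      simpa using Finset.card_biUnion_le_card_mul Finset.univ D 1 fun j _ => hD j
    have := (Finset.card_le_card hBA).trans (Finset.card_union_le _ _)
    exact_mod_cast this.trans (by omega)
  rw [← mul_sub, abs_mul, abs_of_pos (inv_pos.2 hm0), div_eq_inv_mul]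
  refine mul_le_mul_of_nonneg_left ?_ (inv_pos.2 hm0).le
  rw [abs_le]
  constructor <;> linarith [(Nat.cast_nonneg d : (0 : ℝ) ≤ d)]

end Stmt9
end

section
/- Let C:[0,1]^d→[0,1] be a d-dimensional copula, let n ≥ 2, γ ∈ (0,1/2], let U_1,…,U_n ∈ [0,1]^d, let K > 0 and ξ_1,…,ξ_n ∈ ℝ with ξ_i ≥ −K for all i, and set Z_i = ξ_i + K ≥ 0. Define B^ξ(s,u) = n^{−1/2} Σ_{i=1}^{⌊ns⌋} ξ_i {1(U_i ≤ u) − C(u)} and B(s,u) = n^{−1/2} Σ_{i=1}^{⌊ns⌋} {1(U_i ≤ u) − C(u)}. Let N = ⌊n^{1/2+γ}⌋ and, for u ∈ [0,1]^d, let u̲, ū ∈ {0, 1/N, 2/N, …, 1}^d satisfy u̲ ≤ u ≤ ū componentwise and ū_j − u̲_j ≤ 1/N for all j. Then for every (s,u) ∈ [0,1]^{d+1}: |B^ξ(s,u) − B^ξ(s,u̲)| ≤ |B^ξ(s,ū) − B^ξ(s,u̲)| + K |B(s,ū) − B(s,u̲)| + d (n^γ − 1)^{−1} ( K + max_{1≤i≤n}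 |Z_i| ). -/
/-!
Write `ξ i = Z i - K` with `Z i ≥ 0`, so that an increment of `B^ξ` is the increment of the
`Z`-weighted process minus `K` times that of `B`. In each of these two the indicator part and the
compensator part are nondecreasing in `u`; hence their increments from `ulo` to `u` lie between `0`
and their increments from `ulo` to `uhi`. Replacing `u` by `uhi` in the terms of the favourable sign and dropping those of
the other sign costs at most
`n^{-1/2} (C uhi - C ulo) (∑ Z i + K m)` with `m = ⌊ns⌋` (`abs_weighted_increment_le`).
The `ℓ¹`-Lipschitz property of `C` (`cdf_sub_le_sum`) bounds this by
`√n (d / N) (max |Z i| + K)`, and `√n / N ≤ (n^γ - 1)⁻¹` (`sqrt_div_floor_le`).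
-/

open Set

namespace Stmt10

variable (d n : ℕ) (C : (Fin d → ℝ) → ℝ) (U : ℕ → Fin d → ℝ) (ξ : ℕ → ℝ)

/-- Multiplier partial-sum process
`B^ξ(s,u) = n^{−1/2} Σ_{i=1}^{⌊ns⌋} ξ_i {1(U_i ≤ u) − C(u)}`. -/
noncomputable def Bxi (s : ℝ) (u : Fin d → ℝ) : ℝ :=
  (Real.sqrt n)⁻¹ * ∑ i ∈ Finset.Icc 1 ⌊(n : ℝ) * s⌋₊,
    ξ i * ((if ∀ j, U i j ≤ u j then (1 : ℝ) else 0) - C u)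

/-- Partial-sum empirical process
`B(s,u) = n^{−1/2} Σ_{i=1}^{⌊ns⌋} {1(U_i ≤ u) − C(u)}`. -/
noncomputable def B (s : ℝ) (u : Fin d → ℝ) : ℝ :=
  (Real.sqrt n)⁻¹ * ∑ i ∈ Finset.Icc 1 ⌊(n : ℝ) * s⌋₊,
    ((if ∀ j, U i j ≤ u j then (1 : ℝ) else 0) - C u)

/-- Lipschitz bound for a c.d.f. with standard uniform margins: the difference of the two lower
orthants is covered by the strips `a j < y j ≤ b j`. -/
lemma cdf_sub_le_sum {d : ℕ} (μ : MeasureTheory.Measure (Fin d → ℝ))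
    [MeasureTheory.IsProbabilityMeasure μ]
    (hμmarg : ∀ j : Fin d, ∀ x ∈ Icc (0 : ℝ) 1, (μ {y | y j ≤ x}).toReal = x)
    (a b : Fin d → ℝ) (ha : ∀ j, a j ∈ Icc (0 : ℝ) 1) (hb : ∀ j, b j ∈ Icc (0 : ℝ) 1)
    (hab : ∀ j, a j ≤ b j) :
    (μ {x | ∀ j, x j ≤ b j}).toReal - (μ {x | ∀ j, x j ≤ a j}).toReal ≤ ∑ j, (b j - a j) := by
  have hstrip : ∀ j, μ.real ({y | y j ≤ b j} \ {y | y j ≤ a j}) = b j - a j := by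
    intro j
    have hsub : {y : Fin d → ℝ | y j ≤ a j} ⊆ {y | y j ≤ b j} := fun y hy => le_trans hy (hab j)
    rw [MeasureTheory.measureReal_sdiff hsub
      (measurableSet_le (measurable_pi_apply j) measurable_const)]
    simp only [MeasureTheory.measureReal_def]
    rw [hμmarg j _ (ha j), hμmarg j _ (hb j)]
  have hcover : {x : Fin d → ℝ | ∀ j, x j ≤ b j} ⊆
      {x | ∀ j, x j ≤ a j} ∪ ⋃ j, ({y | y j ≤ b j} \ {y | y j ≤ a j}) := by
    intro x hx
    by_cases h : ∀ j, x j ≤ a j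
    · exact Or.inl h
    · obtain ⟨j, hj⟩ := not_forall.1 h
      exact Or.inr (mem_iUnion.2 ⟨j, hx j, hj⟩)
  have h1 := (MeasureTheory.measureReal_mono (μ := μ) hcover).trans
    (MeasureTheory.measureReal_union_le _ _)
  have h2 := MeasureTheory.measureReal_iUnion_fintype_le (μ := μ)
    (fun j : Fin d => ({y : Fin d → ℝ | y j ≤ b j} \ {y | y j ≤ a j}))
  simp only [hstrip] at h2
  simp only [MeasureTheory.measureReal_def] at h1 h2
  linarith

lemma sqrt_div_floor_le {n : ℕ} (hn : 2 ≤ n) {γ : ℝ} (hγ : 0 < γ) :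
    0 < (n : ℝ) ^ γ - 1 ∧ 0 < (⌊(n : ℝ) ^ ((1 : ℝ) / 2 + γ)⌋₊ : ℝ) ∧
      Real.sqrt n * (1 / (⌊(n : ℝ) ^ ((1 : ℝ) / 2 + γ)⌋₊ : ℝ)) ≤ ((n : ℝ) ^ γ - 1)⁻¹ := by
  have hn1 : (1 : ℝ) < n := by exact_mod_cast hn
  have h1 : 1 < (n : ℝ) ^ γ := Real.one_lt_rpow hn1 hγ
  have hs : 1 ≤ Real.sqrt n := Real.one_le_sqrt.2 hn1.le
  have hsplit : (n : ℝ) ^ ((1 : ℝ) / 2 + γ) = Real.sqrt n * (n : ℝ) ^ γ := by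
    rw [Real.rpow_add (by linarith), ← Real.sqrt_eq_rpow]
  have hfl := Nat.lt_floor_add_one ((n : ℝ) ^ ((1 : ℝ) / 2 + γ))
  have hN : Real.sqrt n * ((n : ℝ) ^ γ - 1) ≤ (⌊(n : ℝ) ^ ((1 : ℝ) / 2 + γ)⌋₊ : ℝ) := by
    nlinarith
  have hg : 0 < (n : ℝ) ^ γ - 1 := by linarith
  have hN0 : 0 < (⌊(n : ℝ) ^ ((1 : ℝ) / 2 + γ)⌋₊ : ℝ) := lt_of_lt_of_le (by positivity) hN
  refine ⟨hg, hN0, ?_⟩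
  rw [mul_one_div, div_le_iff₀ hN0, inv_mul_eq_div, le_div_iff₀ hg]
  exact hN

/-- The bracketing step. Here `f ≤ g ≤ h` play the indicators at `ulo`, `u`, `uhi`, and
`p ≤ q ≤ r` the values of `C` there. -/
lemma abs_weighted_increment_le (S : Finset ℕ) (ξ f g h : ℕ → ℝ) (p q r K c : ℝ)
    (hc : 0 ≤ c) (hK : 0 ≤ K) (hξ : ∀ i ∈ S, 0 ≤ ξ i + K)
    (hfg : ∀ i ∈ S, f i ≤ g i) (hgh : ∀ i ∈ S, g i ≤ h i) (hpq : p ≤ q) (hqr : q ≤ r) :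
    |c * ∑ i ∈ S, ξ i * (g i - q) - c * ∑ i ∈ S, ξ i * (f i - p)| ≤
      |c * ∑ i ∈ S, ξ i * (h i - r) - c * ∑ i ∈ S, ξ i * (f i - p)|
        + K * |c * ∑ i ∈ S, (h i - r) - c * ∑ i ∈ S, (f i - p)|
        + c * ((r - p) * (∑ i ∈ S, (ξ i + K) + K * S.card)) := by
  have key : ∀ (k : ℕ → ℝ) (t : ℝ),
      ∑ i ∈ S, ξ i * (k i - t) - ∑ i ∈ S, ξ i * (f i - p) =
        ∑ i ∈ S, (ξ i + K) * (k i - f i) - (t - p) * ∑ i ∈ S, (ξ i + K)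
          - K * (∑ i ∈ S, (k i - f i)) + K * ((t - p) * S.card) := by
    intro k t
    have hcard : (t - p) * (S.card : ℝ) = ∑ i ∈ S, (t - p) := by
      rw [Finset.sum_const, nsmul_eq_mul, mul_comm]
    rw [hcard]
    simp only [Finset.mul_sum, ← Finset.sum_sub_distrib, ← Finset.sum_add_distrib]
    exact Finset.sum_congr rfl fun i _ => by ring
  have key' : ∑ i ∈ S, (h i - r) - ∑ i ∈ S, (f i - p) =
      ∑ i ∈ S, (h i - f i) - (r - p) * S.card := by
    have hcard : (r - p) * (S.card : ℝ) = ∑ i ∈ S, (r - p) := by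
      rw [Finset.sum_const, nsmul_eq_mul, mul_comm]
    rw [hcard]
    simp only [← Finset.sum_sub_distrib]
    exact Finset.sum_congr rfl fun i _ => by ring
  have hX0 : 0 ≤ ∑ i ∈ S, (ξ i + K) * (g i - f i) :=
    Finset.sum_nonneg fun i hi => mul_nonneg (hξ i hi) (sub_nonneg.2 (hfg i hi))
  have hX : ∑ i ∈ S, (ξ i + K) * (g i - f i) ≤ ∑ i ∈ S, (ξ i + K) * (h i - f i) :=
    Finset.sum_le_sum fun i hi =>
      mul_le_mul_of_nonneg_left (sub_le_sub_right (hgh i hi) _) (hξ i hi)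
  have hY0 : 0 ≤ K * ∑ i ∈ S, (g i - f i) :=
    mul_nonneg hK (Finset.sum_nonneg fun i hi => sub_nonneg.2 (hfg i hi))
  have hY : K * ∑ i ∈ S, (g i - f i) ≤ K * ∑ i ∈ S, (h i - f i) :=
    mul_le_mul_of_nonneg_left
      (Finset.sum_le_sum fun i hi => sub_le_sub_right (hgh i hi) _) hK
  have hP : 0 ≤ ∑ i ∈ S, (ξ i + K) := Finset.sum_nonneg hξ
  have hP0 : 0 ≤ (q - p) * ∑ i ∈ S, (ξ i + K) := mul_nonneg (sub_nonneg.2 hpq) hP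
  have hP1 : (q - p) * ∑ i ∈ S, (ξ i + K) ≤ (r - p) * ∑ i ∈ S, (ξ i + K) :=
    mul_le_mul_of_nonneg_right (sub_le_sub_right hqr _) hP
  have hQ0 : 0 ≤ K * ((q - p) * S.card) :=
    mul_nonneg hK (mul_nonneg (sub_nonneg.2 hpq) (Nat.cast_nonneg _))
  have hQ1 : K * ((q - p) * S.card) ≤ K * ((r - p) * S.card) :=
    mul_le_mul_of_nonneg_left
      (mul_le_mul_of_nonneg_right (sub_le_sub_right hqr _) (Nat.cast_nonneg _)) hK
  simp only [← mul_sub]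
  rw [key g q, key h r, key', abs_mul, abs_mul, abs_mul, abs_of_nonneg hc]
  have main : ∀ x y z w : ℝ, x ≤ y + K * z + w → c * x ≤ c * y + K * (c * z) + c * w := by
    intro x y z w hx
    have := mul_le_mul_of_nonneg_left hx hc
    linarith
  apply main
  generalize ∑ i ∈ S, (ξ i + K) * (g i - f i) = X at *
  generalize ∑ i ∈ S, (ξ i + K) * (h i - f i) = X' at *
  generalize ∑ i ∈ S, (g i - f i) = Y at *
  generalize ∑ i ∈ S, (h i - f i) = Y' at *
  generalize ∑ i ∈ S, (ξ i + K) = P at *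
  have hE := mul_le_mul_of_nonneg_left (le_abs_self (Y' - (r - p) * S.card)) hK
  have hD := le_abs_self (X' - (r - p) * P - K * Y' + K * ((r - p) * S.card))
  have hD0 := abs_nonneg (X' - (r - p) * P - K * Y' + K * ((r - p) * S.card))
  rw [abs_le]
  constructor <;> nlinarith

/-- Deterministic chaining inequality for the multiplier
empirical process over the grid `{0, 1/N, …, 1}^d` with `N = ⌊n^{1/2+γ}⌋`. -/
theorem multiplier_process_chaining_inequality
    (hn : 2 ≤ n) (γ : ℝ) (hγ : γ ∈ Ioc (0 : ℝ) (1 / 2))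
    (μ : MeasureTheory.Measure (Fin d → ℝ)) [MeasureTheory.IsProbabilityMeasure μ]
    (hμsupp : μ {x | ¬ ∀ j, x j ∈ Icc (0 : ℝ) 1} = 0)
    (hμmarg : ∀ j : Fin d, ∀ x ∈ Icc (0 : ℝ) 1, (μ {y | y j ≤ x}).toReal = x)
    (hC : ∀ u : Fin d → ℝ, (∀ j, u j ∈ Icc (0 : ℝ) 1) →
      C u = (μ {x | ∀ j, x j ≤ u j}).toReal)
    (hU : ∀ i, 1 ≤ i → i ≤ n → ∀ j, U i j ∈ Icc (0 : ℝ) 1)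
    (K : ℝ) (hK : 0 < K) (hξ : ∀ i, 1 ≤ i → i ≤ n → -K ≤ ξ i)
    (s : ℝ) (hs : s ∈ Icc (0 : ℝ) 1)
    (u ulo uhi : Fin d → ℝ) (hu : ∀ j, u j ∈ Icc (0 : ℝ) 1)
    (hgridlo : ∀ j, ∃ k : ℕ, k ≤ ⌊(n : ℝ) ^ ((1 : ℝ) / 2 + γ)⌋₊ ∧
      ulo j = (k : ℝ) / (⌊(n : ℝ) ^ ((1 : ℝ) / 2 + γ)⌋₊ : ℝ))
    (hgridhi : ∀ j, ∃ k : ℕ, k ≤ ⌊(n : ℝ) ^ ((1 : ℝ) / 2 + γ)⌋₊ ∧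
      uhi j = (k : ℝ) / (⌊(n : ℝ) ^ ((1 : ℝ) / 2 + γ)⌋₊ : ℝ))
    (hle : ∀ j, ulo j ≤ u j ∧ u j ≤ uhi j)
    (hgap : ∀ j, uhi j - ulo j ≤ 1 / (⌊(n : ℝ) ^ ((1 : ℝ) / 2 + γ)⌋₊ : ℝ)) :
    |Bxi d n C U ξ s u - Bxi d n C U ξ s ulo|
      ≤ |Bxi d n C U ξ s uhi - Bxi d n C U ξ s ulo|
        + K * |B d n C U s uhi - B d n C U s ulo|
        + (d : ℝ) * ((n : ℝ) ^ γ - 1)⁻¹ *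
            (K + (Finset.Icc 1 n).sup' (Finset.nonempty_Icc.2 (by omega))
              fun i => |ξ i + K|) := by
  obtain ⟨hg, hN0, hsN⟩ := sqrt_div_floor_le hn hγ.1
  set N : ℝ := (⌊(n : ℝ) ^ ((1 : ℝ) / 2 + γ)⌋₊ : ℝ) with hN
  have hgrid : ∀ v : Fin d → ℝ, (∀ j, ∃ k : ℕ, k ≤ ⌊(n : ℝ) ^ ((1 : ℝ) / 2 + γ)⌋₊ ∧
      v j = (k : ℝ) / N) → ∀ j, v j ∈ Icc (0 : ℝ) 1 := by
    intro v hv j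
    obtain ⟨k, hk, hkv⟩ := hv j
    rw [hkv]
    have hkN : (k : ℝ) ≤ N := by rw [hN]; exact_mod_cast hk
    exact ⟨by positivity, (div_le_one hN0).2 hkN⟩
  have hlo := hgrid ulo hgridlo
  have hhi := hgrid uhi hgridhi
  have hCmono : ∀ a b : Fin d → ℝ, (∀ j, a j ∈ Icc (0 : ℝ) 1) → (∀ j, b j ∈ Icc (0 : ℝ) 1) →
      (∀ j, a j ≤ b j) → C a ≤ C b := by
    intro a b ha hb hab
    rw [hC a ha, hC b hb]
    exact MeasureTheory.measureReal_mono (μ := μ) fun x hx j => (hx j).trans (hab j)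
  have hImono : ∀ (a b : Fin d → ℝ) (i : ℕ), (∀ j, a j ≤ b j) →
      (if ∀ j, U i j ≤ a j then (1 : ℝ) else 0) ≤ (if ∀ j, U i j ≤ b j then (1 : ℝ) else 0) := by
    intro a b i hab
    by_cases h : ∀ j, U i j ≤ a j
    · rw [if_pos h, if_pos fun j => (h j).trans (hab j)]
    · rw [if_neg h]; split_ifs <;> norm_num
  have hCgap : C uhi - C ulo ≤ d * (1 / N) := by
    rw [hC _ hlo, hC _ hhi]
    refine (cdf_sub_le_sum μ hμmarg ulo uhi hlo hhi
      fun j => (hle j).1.trans (hle j).2).trans ?_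
    refine (Finset.sum_le_sum fun j _ => hgap j).trans ?_
    simp
  have hm : ⌊(n : ℝ) * s⌋₊ ≤ n := by
    apply Nat.floor_le_of_le
    exact mul_le_of_le_one_right (Nat.cast_nonneg n) hs.2
  have hmem : ∀ i ∈ Finset.Icc 1 ⌊(n : ℝ) * s⌋₊, 1 ≤ i ∧ i ≤ n := fun i hi =>
    ⟨(Finset.mem_Icc.1 hi).1, (Finset.mem_Icc.1 hi).2.trans hm⟩
  set M := (Finset.Icc 1 n).sup' (Finset.nonempty_Icc.2 (by omega)) fun i => |ξ i + K| with hM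
  have hZM : ∀ i ∈ Finset.Icc 1 ⌊(n : ℝ) * s⌋₊, ξ i + K ≤ M := fun i hi =>
    (le_abs_self _).trans
      (Finset.le_sup' (fun i => |ξ i + K|) (Finset.mem_Icc.2 (hmem i hi)))
  have hM0 : 0 ≤ M := (abs_nonneg (ξ 1 + K)).trans
    (Finset.le_sup' (fun i => |ξ i + K|) (Finset.mem_Icc.2 ⟨le_rfl, by omega⟩))
  have hcard : ((Finset.Icc 1 ⌊(n : ℝ) * s⌋₊).card : ℝ) ≤ n := by
    rw [Nat.card_Icc]; exact_mod_cast hm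
  have hsum : ∑ i ∈ Finset.Icc 1 ⌊(n : ℝ) * s⌋₊, (ξ i + K) ≤ n * M := by
    refine (Finset.sum_le_card_nsmul _ _ _ hZM).trans ?_
    rw [nsmul_eq_mul]
    exact mul_le_mul_of_nonneg_right hcard hM0
  have hbracket := abs_weighted_increment_le (Finset.Icc 1 ⌊(n : ℝ) * s⌋₊) ξ
    (fun i => if ∀ j, U i j ≤ ulo j then (1 : ℝ) else 0)
    (fun i => if ∀ j, U i j ≤ u j then (1 : ℝ) else 0)
    (fun i => if ∀ j, U i j ≤ uhi j then (1 : ℝ) else 0)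
    (C ulo) (C u) (C uhi) K (Real.sqrt n)⁻¹ (by positivity) hK.le
    (fun i hi => by linarith [hξ i (hmem i hi).1 (hmem i hi).2])
    (fun i _ => hImono _ _ i fun j => (hle j).1)
    (fun i _ => hImono _ _ i fun j => (hle j).2)
    (hCmono _ _ hlo hu fun j => (hle j).1) (hCmono _ _ hu hhi fun j => (hle j).2)
  refine hbracket.trans (add_le_add le_rfl ?_)
  have hn0 : (0 : ℝ) < n := by exact_mod_cast (by omega : 0 < n)
  calc (Real.sqrt n)⁻¹ * ((C uhi - C ulo) *
        (∑ i ∈ Finset.Icc 1 ⌊(n : ℝ) * s⌋₊, (ξ i + K)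
          + K * (Finset.Icc 1 ⌊(n : ℝ) * s⌋₊).card))
      ≤ (Real.sqrt n)⁻¹ * ((d * (1 / N)) * (n * M + K * n)) := by
        have hsum0 : 0 ≤ ∑ i ∈ Finset.Icc 1 ⌊(n : ℝ) * s⌋₊, (ξ i + K) :=
          Finset.sum_nonneg fun i hi => by linarith [hξ i (hmem i hi).1 (hmem i hi).2]
        gcongr
    _ = d * (Real.sqrt n * (1 / N)) * (K + M) := by
        have h : (Real.sqrt n)⁻¹ * n = Real.sqrt n := by
          rw [inv_mul_eq_div, Real.div_sqrt]
        linear_combination (d * (1 / N) * (K + M)) * h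
    _ ≤ d * ((n : ℝ) ^ γ - 1)⁻¹ * (K + M) := by gcongr

end Stmt10
end

section
/- Let κ:ℝ→ℝ be bounded with κ(x) = 0 for all |x| > 1 and Lipschitz on [−1,1], i.e., there exists λ > 0 with |κ(x) − κ(y)| ≤ λ|x − y| for all x,y ∈ [−1,1]. Let (b_n) be positive integers with b_n → ∞ and let (r_n) be nonnegative integers with r_n/b_n → γ for some γ ∈ [0,1]. Then (1/b_n) Σ_{j=−b_n}^{b_n} κ(j/b_n) κ((r_n − j)/b_n) → ∫_{−1}^{1} κ(x) κ(γ − x) dx = (κ⋆κ)(γ) as n → ∞, where ⋆ denotes convolution of real functions: (κ⋆κ)(γ) = ∫_ℝ κ(x) κ(γ − x) dx. -/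
/-!
The normalized sum is the integral over `ℝ` of the step function
`x ↦ κ (⌊b x⌋ / b) * κ ((r - ⌊b x⌋) / b)`, whose value on `[j/b, (j+1)/b)` is the `j`-th summand;
no summand outside `-b ≤ j ≤ b` contributes, because `κ` vanishes off `[-1, 1]`
(`integral_step_eq_sum`). Since `⌊b x⌋ / b → x` and `κ` is continuous away from `±1`
(`kernel_continuousAt`), these step functions converge to `κ x * κ (γ - x)` for every `x` outside
the finite set where `|x| = 1` or `|γ - x| = 1`. They are bounded by `M * M` and supported in
`[-1, 2]`, so dominated convergence gives the limit as an integral over `ℝ`, and this integral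
equals the one over `[-1, 1]` because `κ` vanishes off that interval.
-/

open Set Filter
open MeasureTheory Topology

theorem kernel_continuousAt {κ : ℝ → ℝ} (hzero : ∀ x : ℝ, 1 < |x| → κ x = 0) {lip : ℝ}
    (hlippos : 0 < lip)
    (hlip : ∀ x ∈ Icc (-1 : ℝ) 1, ∀ y ∈ Icc (-1 : ℝ) 1, |κ x - κ y| ≤ lip * |x - y|)
    {x : ℝ} (hx : |x| ≠ 1) : ContinuousAt κ x := by
  rcases lt_or_gt_of_ne hx with h | h
  · have hL : LipschitzOnWith ⟨lip, hlippos.le⟩ κ (Icc (-1 : ℝ) 1) :=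
      LipschitzOnWith.of_dist_le_mul fun x hx y hy => by
        simp only [Real.dist_eq]
        exact hlip x hx y hy
    rw [abs_lt] at h
    exact hL.continuousOn.continuousAt (Icc_mem_nhds h.1 h.2)
  · have hev : ∀ᶠ y in 𝓝 x, 1 < |y| := continuous_abs.continuousAt.eventually_const_lt h
    refine (continuousAt_const (y := (0 : ℝ))).congr ?_
    filter_upwards [hev] with y hy using (hzero y hy).symm

theorem setOf_floor_mul_eq {b : ℕ} (hb : 0 < b) (j : ℤ) :
    {x : ℝ | ⌊(b : ℝ) * x⌋ = j} = Ico ((j : ℝ) / b) (((j : ℝ) + 1) / b) := by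
  have hb' : (0 : ℝ) < b := by exact_mod_cast hb
  ext x
  rw [mem_ofPred_eq, Int.floor_eq_iff, mem_Ico, div_le_iff₀ hb', lt_div_iff₀ hb', mul_comm]

theorem step_eq_sum_indicator {b : ℕ} {g : ℤ → ℝ}
    (hg : ∀ j ∉ Finset.Icc (-(b : ℤ)) b, g j = 0) :
    (fun x : ℝ => g ⌊(b : ℝ) * x⌋) = fun x => ∑ j ∈ Finset.Icc (-(b : ℤ)) b,
      {x : ℝ | ⌊(b : ℝ) * x⌋ = j}.indicator (fun _ => g j) x := by
  funext x
  simp only [indicator_apply, mem_ofPred_eq, Finset.sum_ite_eq]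
  split_ifs with h
  · rfl
  · exact hg _ h

theorem measurable_step {b : ℕ} (g : ℤ → ℝ) :
    Measurable (fun x : ℝ => g ⌊(b : ℝ) * x⌋) :=
  (measurable_from_top (f := g)).comp (Int.measurable_floor.comp (measurable_const_mul _))

theorem integral_step_eq_sum {b : ℕ} (hb : 0 < b) {g : ℤ → ℝ}
    (hg : ∀ j ∉ Finset.Icc (-(b : ℤ)) b, g j = 0) :
    ∫ x : ℝ, g ⌊(b : ℝ) * x⌋ = (b : ℝ)⁻¹ * ∑ j ∈ Finset.Icc (-(b : ℤ)) b, g j := by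
  have hb' : (0 : ℝ) < b := by exact_mod_cast hb
  rw [step_eq_sum_indicator hg, integral_finsetSum, Finset.mul_sum]
  · refine Finset.sum_congr rfl fun j _ => ?_
    rw [setOf_floor_mul_eq hb, integral_indicator measurableSet_Ico, setIntegral_const,
      measureReal_def, Real.volume_Ico, ENNReal.toReal_ofReal, smul_eq_mul]
    · congr 1
      field_simp
      ring
    · rw [← sub_div, add_sub_cancel_left]
      positivity
  · intro j _
    rw [setOf_floor_mul_eq hb, integrable_indicator_iff measurableSet_Ico]
    exact integrableOn_const (by simp)

theorem tendsto_floor_mul_div {b : ℕ → ℕ} (hbpos : ∀ n, 0 < b n)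
    (hbinf : Tendsto (fun n => (b n : ℝ)) atTop atTop) (x : ℝ) :
    Tendsto (fun n => (⌊(b n : ℝ) * x⌋ : ℝ) / b n) atTop (𝓝 x) := by
  have hinv : Tendsto (fun n => x - (b n : ℝ)⁻¹) atTop (𝓝 x) := by
    simpa using tendsto_const_nhds.sub (tendsto_inv_atTop_zero.comp hbinf)
  refine tendsto_of_tendsto_of_tendsto_of_le_of_le hinv tendsto_const_nhds (fun n => ?_)
    (fun n => ?_)
  · have hb' : (0 : ℝ) < b n := by exact_mod_cast hbpos n
    have := Int.lt_floor_add_one ((b n : ℝ) * x)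
    change x - (b n : ℝ)⁻¹ ≤ _
    rw [le_div_iff₀ hb', sub_mul, inv_mul_cancel₀ hb'.ne']
    linarith
  · have hb' : (0 : ℝ) < b n := by exact_mod_cast hbpos n
    change _ ≤ x
    rw [div_le_iff₀ hb', mul_comm x]
    exact Int.floor_le _

/-- Riemann-sum convergence of the discrete autoconvolution of a
bounded kernel `κ` vanishing outside `[-1,1]` and Lipschitz on `[-1,1]`:
if `b_n → ∞` and `r_n / b_n → γ ∈ [0,1]`, then
`(1/b_n) Σ_{j=−b_n}^{b_n} κ(j/b_n) κ((r_n − j)/b_n) → ∫_{−1}^{1} κ(x) κ(γ − x) dx`,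
and this limit equals the convolution `(κ⋆κ)(γ) = ∫_ℝ κ(x) κ(γ − x) dx`. -/
theorem kernel_discrete_convolution_limit (κ : ℝ → ℝ)
    (M : ℝ) (hbd : ∀ x, |κ x| ≤ M)
    (hzero : ∀ x : ℝ, 1 < |x| → κ x = 0)
    (lip : ℝ) (hlippos : 0 < lip)
    (hlip : ∀ x ∈ Icc (-1 : ℝ) 1, ∀ y ∈ Icc (-1 : ℝ) 1, |κ x - κ y| ≤ lip * |x - y|)
    (b : ℕ → ℕ) (hbpos : ∀ n, 0 < b n)
    (hbinf : Tendsto (fun n => (b n : ℝ)) atTop atTop)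
    (r : ℕ → ℕ) (γ : ℝ) (hγ : γ ∈ Icc (0 : ℝ) 1)
    (hr : Tendsto (fun n => (r n : ℝ) / (b n : ℝ)) atTop (nhds γ)) :
    Tendsto
      (fun n => (b n : ℝ)⁻¹ *
        ∑ j ∈ Finset.Icc (-(b n : ℤ)) (b n : ℤ),
          κ ((j : ℝ) / (b n : ℝ)) * κ (((r n : ℝ) - (j : ℝ)) / (b n : ℝ)))
      atTop (nhds (∫ x in (-1 : ℝ)..1, κ x * κ (γ - x))) ∧
    (∫ x in (-1 : ℝ)..1, κ x * κ (γ - x)) = ∫ x : ℝ, κ x * κ (γ - x) := by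
  have hM : 0 ≤ M := (abs_nonneg _).trans (hbd 0)
  have hsecond : (∫ x in (-1 : ℝ)..1, κ x * κ (γ - x)) = ∫ x : ℝ, κ x * κ (γ - x) := by
    rw [intervalIntegral.integral_of_le (by norm_num), ← integral_Icc_eq_integral_Ioc]
    refine setIntegral_eq_integral_of_forall_compl_eq_zero fun x hx => ?_
    rw [hzero x (by by_contra! h; exact hx (abs_le.mp h)), zero_mul]
  refine ⟨?_, hsecond⟩
  rw [hsecond]
  set g : ℕ → ℤ → ℝ := fun n j =>
    κ ((j : ℝ) / (b n : ℝ)) * κ (((r n : ℝ) - (j : ℝ)) / (b n : ℝ)) with hgdef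
  have hg : ∀ n, ∀ j ∉ Finset.Icc (-(b n : ℤ)) (b n), g n j = 0 := by
    intro n j hj
    have hb' : (0 : ℝ) < b n := by exact_mod_cast hbpos n
    have hlt : (b n : ℤ) < |j| := by
      by_contra! h
      exact hj (Finset.mem_Icc.mpr (abs_le.mp h))
    have hlt' : (b n : ℝ) < |(j : ℝ)| := by exact_mod_cast hlt
    have : κ ((j : ℝ) / (b n : ℝ)) = 0 := hzero _ (by
      rw [abs_div, abs_of_pos hb', one_lt_div hb']
      exact hlt')
    simp only [hgdef, this, zero_mul]
  suffices h : Tendsto (fun n => ∫ x : ℝ, g n ⌊(b n : ℝ) * x⌋) atTop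
      (𝓝 (∫ x : ℝ, κ x * κ (γ - x))) from
    h.congr fun n => integral_step_eq_sum (hbpos n) (hg n)
  refine tendsto_integral_of_dominated_convergence
    ((Icc (-1 : ℝ) 2).indicator fun _ => M * M)
    (fun n => (measurable_step (g n)).aestronglyMeasurable) ?_ (fun n => ?_) ?_
  · rw [integrable_indicator_iff measurableSet_Icc]
    exact integrableOn_const (by simp)
  · refine Eventually.of_forall fun x => ?_
    have hb' : (0 : ℝ) < b n := by exact_mod_cast hbpos n
    by_cases hx : x ∈ Icc (-1 : ℝ) 2
    · rw [indicator_of_mem hx, Real.norm_eq_abs, abs_mul]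
      exact mul_le_mul (hbd _) (hbd _) (abs_nonneg _) hM
    · rw [indicator_of_notMem hx, hg n, norm_zero]
      -- `-b ≤ ⌊b x⌋ ≤ b` forces `-1 ≤ x < 1 + 1 / b ≤ 2`.
      intro hj
      rw [Finset.mem_Icc] at hj
      have h1 : (1 : ℝ) ≤ b n := by exact_mod_cast hbpos n
      have hlo : -(b n : ℝ) ≤ ⌊(b n : ℝ) * x⌋ := by exact_mod_cast hj.1
      have hhi : (⌊(b n : ℝ) * x⌋ : ℝ) ≤ b n := by exact_mod_cast hj.2
      have hf1 := Int.floor_le ((b n : ℝ) * x)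
      have hf2 := Int.lt_floor_add_one ((b n : ℝ) * x)
      refine hx ⟨?_, ?_⟩
      · exact le_of_mul_le_mul_left (by linarith) hb'
      · exact le_of_mul_le_mul_left (by linarith) hb'
  · have hfin : ({1, -1, γ - 1, γ + 1} : Set ℝ).Finite := by simp
    filter_upwards [hfin.countable.ae_notMem volume] with x hx
    simp only [mem_insert_iff, mem_singleton_iff, not_or] at hx
    obtain ⟨hx1, hx2, hx3, hx4⟩ := hx
    have hxabs : |x| ≠ 1 := fun h => by
      rcases eq_or_eq_neg_of_abs_eq h with h | h
      exacts [hx1 h, hx2 h]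
    have hγabs : |γ - x| ≠ 1 := fun h => by
      rcases eq_or_eq_neg_of_abs_eq h with h | h
      exacts [hx3 (by linarith), hx4 (by linarith)]
    have hfl := tendsto_floor_mul_div hbpos hbinf x
    have h1 := (kernel_continuousAt hzero hlippos hlip hxabs).tendsto.comp hfl
    have h2 := (kernel_continuousAt hzero hlippos hlip hγabs).tendsto.comp (hr.sub hfl)
    refine (h1.mul h2).congr fun n => ?_
    simp only [hgdef, Function.comp_apply, sub_div]
end
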